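/- arXiv:1104.0440 — 6 statements merged into one kernel-verified Lean document; each statement's English description precedes it below -/
import Mathlib

section
/- Under assumption (H), the Abel equation (N) admits a C¹, T-periodic solution x*: ℝ → ℝ (a solution of (N) on all of ℝ) which has the sign of −A·B, i.e., for every t ∈ ℝ: x*(t) < 0 whenever A(t)·B(t) > 0, x*(t) > 0 whenever A(t)·B(t) < 0, and x*(t) = 0 if and only if A(t) = 0. -/
open Set Filter Topology

/-!
The function `B` has no zero, so `|B| = σ B` with a constant sign `σ = ±1`. The solution is sought
as `x = -σ A p` with `p > 0`. With `β = |B|` and `g = A' - C A`, the Abel equation for `x` is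

  `A p' = 1/p - β - g p`,

an equation for the derivative of `p` along the flow `φ` of the vector field `A`. It degenerates at
the zeros of `A`, which are rest points of `φ`; but there the right-hand side vanishes, and
continuity of `p` is enough for the product `A p` to be differentiable.

Since `A` has a zero in each period and `A' ≥ -a`, where `a = -min A'`, one has `|A| ≤ a T`, hence
`g ≥ -m` with `m = a (1 + T max |C|)`, and the hypothesis says `4 m < b²` for `b = min |B|`. For
`0 < q ≤ 2/b` the `q`-derivative `-1/q² - g` of the right-hand side is therefore at most
`-(b²/4 - m) < 0`; moreover the right-hand side is nonpositive at `q = 2/b` and nonnegative at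
small `q`. So the equation is uniformly dissipative on a compact interval `[l, u]` of positive
numbers: for `N` large, `H(t, q) = q + (1/q - β - g q)/N` maps `[l, u]` to itself and contracts it,
uniformly in `t`. The equation now reads `A p' = N (H(t, p) - p)`, or equivalently

  `p(t) = ∫_0^∞ N e^{-Nτ} H(φ(-τ, t), p(φ(-τ, t))) dτ`,

a fixed point equation for a contraction of the space of continuous functions with values in
`[l, u]`. Uniqueness of the fixed point makes `p` periodic.
-/

open MeasureTheory ProbabilityTheory
open scoped NNReal BoundedContinuousFunction Manifold

/-! ### Flows of Lipschitz vector fields -/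

section Flow

variable {E : Type*} [NormedAddCommGroup E] [NormedSpace ℝ E] {V : E → E} {K : ℝ≥0}

/-- Uniformity of the length of the interval in `x` is what makes the solutions global: on the ball
of radius `‖V x‖ + 1` around `x`, the speed is at most `(1 + K) (‖V x‖ + 1)`. -/
lemma exists_hasDerivAt_of_lipschitzWith [CompleteSpace E] (hK : LipschitzWith K V) (x : E) :
    ∃ γ : ℝ → E, γ 0 = x ∧
      ∀ t ∈ Ioo (-(1 / (1 + K)) : ℝ) (1 / (1 + K)), HasDerivAt γ (V (γ t)) t := by
  have hε : (0 : ℝ) < 1 / (1 + K) := by positivity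
  have hPL : IsPicardLindelof (fun _ => V)
      (⟨0, by linarith, hε.le⟩ : Icc (-(1 / (1 + K)) : ℝ) (1 / (1 + K))) x
      (‖V x‖₊ + 1) 0 ((1 + K) * (‖V x‖₊ + 1)) K := by
    refine .of_time_independent (fun y hy => ?_) hK.lipschitzOnWith ?_
    · have hball : ‖V y‖ ≤ ‖V x‖ + K * (‖V x‖ + 1) := by
        have hVy : ‖V y - V x‖ ≤ K * (‖V x‖ + 1) :=
          (hK.norm_sub_le y x).trans (by gcongr; simpa [dist_eq_norm] using hy)
        linarith [norm_le_norm_add_norm_sub' (V y) (V x)]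
      push_cast [coe_nnnorm]
      linarith
    · simp only [sub_zero, zero_sub, neg_neg, max_self, NNReal.coe_mul, NNReal.coe_add,
        NNReal.coe_one, coe_nnnorm, NNReal.coe_zero]
      field_simp
      exact le_rfl
  obtain ⟨γ, h0, hγ⟩ := hPL.exists_eq_forall_mem_Icc_hasDerivWithinAt₀
  exact ⟨γ, h0, fun t ht => (hγ t (Ioo_subset_Icc_self ht)).hasDerivAt (Icc_mem_nhds ht.1 ht.2)⟩

theorem exists_isIntegralCurve_of_lipschitzWith [CompleteSpace E] (hV : ContDiff ℝ 1 V)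
    (hK : LipschitzWith K V) (x : E) :
    ∃ γ : ℝ → E, γ 0 = x ∧ IsIntegralCurve γ fun _ => V := by
  obtain ⟨γ, h0, hγ⟩ := exists_isMIntegralCurve_of_isMIntegralCurveOn (I := 𝓘(ℝ, E)) (v := V)
    (contMDiff_vectorSpace_iff_contDiff.2 hV) (ε := 1 / (1 + K)) (by positivity) (fun x => by
      obtain ⟨γ, h0, hγ⟩ := exists_hasDerivAt_of_lipschitzWith hK x
      exact ⟨γ, h0, fun t ht => (hγ t ht).hasFDerivAt.hasMFDerivAt.hasMFDerivWithinAt⟩) x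
  refine ⟨γ, h0, fun t => ?_⟩
  have h : HasFDerivAt γ ((1 : ℝ →L[ℝ] ℝ).smulRight (V (γ t))) t := (hγ t).hasFDerivAt
  simpa using h.hasDerivAt

lemma dist_le_of_isIntegralCurve_of_nonneg (hK : LipschitzWith K V) {γ δ : ℝ → E}
    (hγ : IsIntegralCurve γ fun _ => V) (hδ : IsIntegralCurve δ fun _ => V) {t : ℝ} (ht : 0 ≤ t) :
    dist (γ t) (δ t) ≤ dist (γ 0) (δ 0) * Real.exp (K * t) := by
  simpa only [sub_zero] using dist_le_of_trajectories_ODE (v := fun _ => V) (a := 0) (b := t)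
    (fun _ => hK) hγ.continuous.continuousOn (fun s _ => (hγ s).hasDerivWithinAt)
    hδ.continuous.continuousOn (fun s _ => (hδ s).hasDerivWithinAt) le_rfl t ⟨ht, le_rfl⟩

lemma isIntegralCurve_comp_neg {γ : ℝ → E} (hγ : IsIntegralCurve γ fun _ => V) :
    IsIntegralCurve (fun t => γ (-t)) fun _ => -V := by
  simpa [Function.comp_def, Pi.smul_def, Pi.neg_def] using hγ.comp_mul (-1)

lemma dist_le_of_isIntegralCurve (hK : LipschitzWith K V) {γ δ : ℝ → E}
    (hγ : IsIntegralCurve γ fun _ => V) (hδ : IsIntegralCurve δ fun _ => V) (t : ℝ) :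
    dist (γ t) (δ t) ≤ dist (γ 0) (δ 0) * Real.exp (K * |t|) := by
  rcases le_total 0 t with ht | ht
  · rw [abs_of_nonneg ht]
    exact dist_le_of_isIntegralCurve_of_nonneg hK hγ hδ ht
  · have h := dist_le_of_isIntegralCurve_of_nonneg hK.neg (isIntegralCurve_comp_neg hγ)
      (isIntegralCurve_comp_neg hδ) (neg_nonneg.2 ht)
    simpa only [neg_neg, neg_zero, abs_of_nonpos ht] using h

lemma eq_of_isIntegralCurve (hK : LipschitzWith K V) {γ δ : ℝ → E}
    (hγ : IsIntegralCurve γ fun _ => V) (hδ : IsIntegralCurve δ fun _ => V) (h0 : γ 0 = δ 0) :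
    γ = δ := by
  funext t
  simpa [h0] using dist_le_of_isIntegralCurve hK hγ hδ t

/-- The flow of a vector field: every orbit `t ↦ φ t x` is an integral curve of `V`. -/
def IsFlowOf (φ : Flow ℝ E) (V : E → E) : Prop :=
  ∀ x, IsIntegralCurve (φ · x) fun _ => V

theorem exists_isFlowOf [CompleteSpace E] (hV : ContDiff ℝ 1 V) (hK : LipschitzWith K V) :
    ∃ φ : Flow ℝ E, IsFlowOf φ V := by
  choose γ h0 hγ using exists_isIntegralCurve_of_lipschitzWith hV hK
  have hcont : Continuous (Function.uncurry fun t x => γ x t) := by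
    refine continuous_iff_continuousAt.2 fun ⟨t, x⟩ => ?_
    have hbound : Tendsto (fun y : ℝ × E => dist y.2 x * Real.exp (K * |y.1|) +
        dist (γ x y.1) (γ x t)) (𝓝 (t, x)) (𝓝 0) := by
      have hc : Continuous fun y : ℝ × E => dist y.2 x * Real.exp (K * |y.1|) +
          dist (γ x y.1) (γ x t) := by
        have := (hγ x).continuous
        fun_prop
      simpa using hc.tendsto (t, x)
    refine tendsto_iff_dist_tendsto_zero.2
      (squeeze_zero (fun _ => dist_nonneg) (fun y => ?_) hbound)
    have hdep := dist_le_of_isIntegralCurve hK (hγ y.2) (hγ x) y.1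
    rw [h0, h0] at hdep
    exact (dist_triangle _ (γ x y.1) _).trans (add_le_add_left hdep _)
  refine ⟨⟨fun t x => γ x t, hcont, fun s t x => ?_, h0⟩, hγ⟩
  exact congrFun (eq_of_isIntegralCurve hK ((hγ x).comp_add t) (hγ (γ x t)) (by simp [h0])) s

namespace IsFlowOf

variable {φ : Flow ℝ E}

lemma apply_eq_of_isIntegralCurve (hφ : IsFlowOf φ V) (hK : LipschitzWith K V) {γ : ℝ → E}
    (hγ : IsIntegralCurve γ fun _ => V) (t : ℝ) : φ t (γ 0) = γ t :=
  congrFun (eq_of_isIntegralCurve hK (hφ (γ 0)) hγ (φ.map_zero_apply _)) t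

lemma apply_add_period (hφ : IsFlowOf φ V) (hK : LipschitzWith K V) {c : E}
    (hc : Function.Periodic V c) (t : ℝ) (x : E) : φ t (x + c) = φ t x + c := by
  have hγ : IsIntegralCurve (fun s => φ s x + c) fun _ => V := fun s => by
    simpa only [hc _] using (hφ x s).add_const c
  simpa only [φ.map_zero_apply] using hφ.apply_eq_of_isIntegralCurve hK hγ t

lemma apply_eq_self_of_eq_zero (hφ : IsFlowOf φ V) (hK : LipschitzWith K V) {x : E}
    (hx : V x = 0) (t : ℝ) : φ t x = x :=
  hφ.apply_eq_of_isIntegralCurve hK (isIntegralCurve_const fun _ => hx) t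

end IsFlowOf

end Flow

/-! ### Averages over backward orbits -/

lemma integral_expMeasure {E : Type*} [NormedAddCommGroup E] [NormedSpace ℝ E] {r : ℝ}
    (hr : 0 ≤ r) (f : ℝ → E) :
    ∫ τ, f τ ∂expMeasure r = ∫ τ in Ici 0, (r * Real.exp (-(r * τ))) • f τ := by
  have hdensity : expMeasure r =
      volume.withDensity fun τ => ENNReal.ofReal (exponentialPDFReal r τ) := rfl
  rw [hdensity, integral_withDensity_eq_integral_toReal_smul
    (measurable_exponentialPDFReal r).ennreal_ofReal (ae_of_all _ fun _ => ENNReal.ofReal_lt_top),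
    ← integral_indicator measurableSet_Ici]
  refine integral_congr_ae (ae_of_all _ fun τ => ?_)
  have hpos : 0 ≤ r * Real.exp (-(r * τ)) := by positivity
  by_cases hτ : 0 ≤ τ <;> simp [exponentialPDFReal, gammaPDFReal, hτ, hpos]

lemma hasDerivAt_integral_Iic {E : Type*} [NormedAddCommGroup E] [NormedSpace ℝ E]
    [CompleteSpace E] {f : ℝ → E} (hf : Continuous f) (hint : ∀ b, IntegrableOn f (Iic b))
    (a : ℝ) : HasDerivAt (fun b => ∫ τ in Iic b, f τ) (f a) a := by
  have hsplit : (fun b => ∫ τ in Iic b, f τ) =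
      fun b => (∫ τ in Iic a, f τ) + ∫ τ in a..b, f τ := by
    funext b
    rw [← intervalIntegral.integral_Iic_sub_Iic (hint a) (hint b), add_sub_cancel]
  rw [hsplit]
  exact (intervalIntegral.integral_hasDerivAt_right (hf.intervalIntegrable a a)
    hf.aestronglyMeasurable.stronglyMeasurableAtFilter hf.continuousAt).const_add _

section BackwardAverage

variable {X : Type*} [TopologicalSpace X] {E : Type*} [NormedAddCommGroup E]
  {φ : Flow ℝ X} {r : ℝ} {w w' : X → E}

lemma integrable_backward_orbit (hr : 0 < r) (hw : Continuous w)
    (hbdd : Bornology.IsBounded (range w)) (x : X) :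
    Integrable (fun τ => w (φ (-τ) x)) (expMeasure r) := by
  have := isProbabilityMeasure_expMeasure hr
  obtain ⟨M, hM⟩ := hbdd.exists_norm_le
  have hc : Continuous fun τ => w (φ (-τ) x) := by fun_prop
  exact .of_bound hc.aestronglyMeasurable M (ae_of_all _ fun τ => hM _ (mem_range_self _))

variable [NormedSpace ℝ E]

/-- The average of `w` over the backward orbit of a point, at an exponentially distributed time
with rate `r`. If `φ` is the flow of a vector field `V`, then `u = backwardAverage φ r w` is the
bounded solution of `V u' = r (w - u)`. -/
noncomputable def backwardAverage (φ : Flow ℝ X) (r : ℝ) (w : X → E) (x : X) : E :=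
  ∫ τ, w (φ (-τ) x) ∂expMeasure r

lemma backwardAverage_mem [CompleteSpace E] (hr : 0 < r) (hw : Continuous w) {S : Set E}
    (hconv : Convex ℝ S) (hclosed : IsClosed S) (hbdd : Bornology.IsBounded S)
    (hwS : ∀ x, w x ∈ S) (x : X) : backwardAverage φ r w x ∈ S := by
  have := isProbabilityMeasure_expMeasure hr
  exact hconv.integral_mem hclosed (ae_of_all _ fun _ => hwS _)
    (integrable_backward_orbit hr hw (hbdd.subset (range_subset_iff.2 hwS)) x)

lemma dist_backwardAverage_le (hr : 0 < r) (hw : Continuous w) (hw' : Continuous w')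
    (hbdd : Bornology.IsBounded (range w)) (hbdd' : Bornology.IsBounded (range w')) {d : ℝ}
    (hd : ∀ x, dist (w x) (w' x) ≤ d) (x : X) :
    dist (backwardAverage φ r w x) (backwardAverage φ r w' x) ≤ d := by
  have := isProbabilityMeasure_expMeasure hr
  rw [dist_eq_norm, backwardAverage, backwardAverage,
    ← integral_sub (integrable_backward_orbit hr hw hbdd x)
      (integrable_backward_orbit hr hw' hbdd' x)]
  simpa only [probReal_univ, mul_one] using norm_integral_le_of_norm_le_const
    (μ := expMeasure r) (ae_of_all _ fun τ => (dist_eq_norm _ _).symm.trans_le (hd (φ (-τ) x)))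

lemma continuous_backwardAverage [FirstCountableTopology X] (hr : 0 < r) (hw : Continuous w)
    (hbdd : Bornology.IsBounded (range w)) : Continuous (backwardAverage φ r w) := by
  have := isProbabilityMeasure_expMeasure hr
  obtain ⟨M, hM⟩ := hbdd.exists_norm_le
  exact continuous_of_dominated
    (fun x => (integrable_backward_orbit hr hw hbdd x).aestronglyMeasurable)
    (fun x => ae_of_all _ fun τ => hM _ (mem_range_self _)) (integrable_const M)
    (ae_of_all _ fun τ => by fun_prop)

/-- The substitution `σ = s - τ` moves the dependence on `s` to the endpoint of the integral, where
it can be differentiated although `w` is only continuous. -/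
lemma backwardAverage_apply_flow (hr : 0 ≤ r) (s : ℝ) (x : X) :
    backwardAverage φ r w (φ s x) =
      (r * Real.exp (-(r * s))) • ∫ σ in Iic s, Real.exp (r * σ) • w (φ σ x) := by
  have hpre : (fun σ => s - σ) ⁻¹' Ici 0 = Iic s := by ext; simp
  rw [backwardAverage, integral_expMeasure hr, ← integral_smul,
    ← (volume.measurePreserving_sub_left s).setIntegral_preimage_emb
      (MeasurableEquiv.subLeft s).measurableEmbedding, hpre]
  refine setIntegral_congr_fun measurableSet_Iic fun σ _ => ?_
  rw [← φ.map_add, smul_smul, mul_assoc, ← Real.exp_add]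
  ring_nf

theorem hasDerivAt_backwardAverage [CompleteSpace E] (hr : 0 < r) (hw : Continuous w)
    (hbdd : Bornology.IsBounded (range w)) (x : X) :
    HasDerivAt (fun s => backwardAverage φ r w (φ s x))
      (r • (w x - backwardAverage φ r w x)) 0 := by
  obtain ⟨M, hM⟩ := hbdd.exists_norm_le
  have hc : Continuous fun σ => Real.exp (r * σ) • w (φ σ x) := by fun_prop
  have hint : ∀ b, IntegrableOn (fun σ => Real.exp (r * σ) • w (φ σ x)) (Iic b) := fun b =>
    ((integrableOn_exp_mul_Iic hr b).mul_const M).mono' hc.aestronglyMeasurable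
      (ae_of_all _ fun σ => by
        rw [norm_smul, Real.norm_of_nonneg (Real.exp_pos _).le]
        exact mul_le_mul_of_nonneg_left (hM _ (mem_range_self _)) (Real.exp_pos _).le)
  have hexp : HasDerivAt (fun s => r * Real.exp (-(r * s))) (r * -r) 0 := by
    simpa using (((hasDerivAt_id (0 : ℝ)).const_mul r).neg.exp).const_mul r
  have hx : backwardAverage φ r w x = r • ∫ σ in Iic 0, Real.exp (r * σ) • w (φ σ x) := by
    simpa using backwardAverage_apply_flow (w := w) hr.le 0 x
  rw [funext fun s => backwardAverage_apply_flow (w := w) hr.le s x, hx]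
  refine (hexp.smul (hasDerivAt_integral_Iic hc hint 0)).congr_deriv ?_
  simp [smul_smul, sub_eq_add_neg]

end BackwardAverage

section FixedPoint

variable {X : Type*} [TopologicalSpace X] [FirstCountableTopology X] {E : Type*}
  [NormedAddCommGroup E] [NormedSpace ℝ E] [CompleteSpace E] {φ : Flow ℝ X} {r : ℝ} {S : Set E}

theorem existsUnique_eq_backwardAverage (hr : 0 < r) (hne : S.Nonempty) (hconv : Convex ℝ S)
    (hclosed : IsClosed S) (hbdd : Bornology.IsBounded S) {κ : ℝ≥0} (hκ : κ < 1)
    (H : C(X × S, S)) (hH : ∀ x, LipschitzWith κ fun q => H (x, q)) :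
    ∃! p : C(X, S), ∀ x, (p x : E) = backwardAverage φ r (fun y => (H (y, p y) : E)) x := by
  have : Nonempty (X →ᵇ S) := ⟨.const X ⟨_, hne.some_mem⟩⟩
  have := hclosed.completeSpace_coe
  have hw (p : C(X, S)) : Continuous fun y => (H (y, p y) : E) := by fun_prop
  have hwbdd (p : C(X, S)) : Bornology.IsBounded (range fun y => (H (y, p y) : E)) :=
    hbdd.subset (range_subset_iff.2 fun y => (H (y, p y)).2)
  let F (p : C(X, S)) : C(X, S) :=
    ⟨fun x => ⟨backwardAverage φ r (fun y => (H (y, p y) : E)) x,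
      backwardAverage_mem hr (hw p) hconv hclosed hbdd (fun y => (H (y, p y)).2) x⟩,
      (continuous_backwardAverage hr (hw p) (hwbdd p)).subtype_mk _⟩
  let toBounded (p : C(X, S)) : X →ᵇ S := .mkOfBound p (Metric.diam S) fun x y =>
    Metric.dist_le_diam_of_mem hbdd (p x).2 (p y).2
  have hF : ContractingWith κ fun p : X →ᵇ S => toBounded (F p) := by
    refine ⟨hκ, .of_dist_le_mul fun p q => ?_⟩
    refine (BoundedContinuousFunction.dist_le (by positivity)).2 fun x => ?_
    refine dist_backwardAverage_le hr (hw p) (hw q) (hwbdd p) (hwbdd q) (fun y => ?_) x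
    exact ((hH y).dist_le_mul _ _).trans (by gcongr; exact p.dist_coe_le_dist y)
  have hfix (p : C(X, S)) : (∀ x, (p x : E) = backwardAverage φ r (fun y => (H (y, p y) : E)) x) ↔
      Function.IsFixedPt (fun p : X →ᵇ S => toBounded (F p)) (toBounded p) := by
    rw [Function.IsFixedPt, DFunLike.ext_iff]
    exact forall_congr' fun x => by rw [← Subtype.coe_inj, eq_comm]; rfl
  refine ⟨hF.fixedPoint, (hfix _).2 hF.fixedPoint_isFixedPt, fun p hp => ?_⟩
  exact congrArg BoundedContinuousFunction.toContinuousMap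
    (hF.fixedPoint_unique ((hfix p).1 hp))

end FixedPoint

/-! ### Dissipative equations along a flow -/

/-- The interval `[l, u]` is a trap for the ordinary differential equation `q' = f q`, on which any
two solutions approach each other at a rate between `η` and `N`. -/
structure IsDissipativeOn (f : ℝ → ℝ) (l u η N : ℝ) : Prop where
  nonneg_left : 0 ≤ f l
  nonpos_right : f u ≤ 0
  le_sub : ∀ q ∈ Icc l u, ∀ r ∈ Icc l u, q ≤ r → η * (r - q) ≤ f q - f r
  sub_le : ∀ q ∈ Icc l u, ∀ r ∈ Icc l u, q ≤ r → f q - f r ≤ N * (r - q)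

namespace IsDissipativeOn

variable {f : ℝ → ℝ} {l u η N : ℝ}

lemma mono (hf : IsDissipativeOn f l u η N) {η' N' : ℝ} (hη : η' ≤ η) (hN : N ≤ N') :
    IsDissipativeOn f l u η' N' where
  __ := hf
  le_sub q hq r hr hqr :=
    (mul_le_mul_of_nonneg_right hη (sub_nonneg.2 hqr)).trans (hf.le_sub q hq r hr hqr)
  sub_le q hq r hr hqr :=
    (hf.sub_le q hq r hr hqr).trans (mul_le_mul_of_nonneg_right hN (sub_nonneg.2 hqr))

lemma add_div_mem (hf : IsDissipativeOn f l u η N) (hN : 0 < N) {q : ℝ} (hq : q ∈ Icc l u) :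
    q + f q / N ∈ Icc l u := by
  have hlu : l ≤ u := hq.1.trans hq.2
  have hl := hf.sub_le l (left_mem_Icc.2 hlu) q hq hq.1
  have hu := hf.sub_le q hq u (right_mem_Icc.2 hlu) hq.2
  constructor
  · suffices -(q - l) ≤ f q / N by linarith
    rw [le_div_iff₀ hN]
    linarith [hf.nonneg_left]
  · suffices f q / N ≤ u - q by linarith
    rw [div_le_iff₀ hN]
    linarith [hf.nonpos_right]

lemma dist_add_div_le (hf : IsDissipativeOn f l u η N) (hN : 0 < N) {q r : ℝ}
    (hq : q ∈ Icc l u) (hr : r ∈ Icc l u) :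
    dist (q + f q / N) (r + f r / N) ≤ (1 - η / N) * dist q r := by
  wlog hqr : q ≤ r generalizing q r
  · simpa only [dist_comm] using this hr hq (le_of_not_ge hqr)
  have hup : (f q - f r) / N ≤ r - q := by
    rw [div_le_iff₀ hN, mul_comm]
    exact hf.sub_le q hq r hr hqr
  have hlow : η / N * (r - q) ≤ (f q - f r) / N := by
    rw [div_mul_eq_mul_div]
    exact div_le_div_of_nonneg_right (hf.le_sub q hq r hr hqr) hN.le
  rw [sub_div] at hup hlow
  rw [dist_comm, dist_comm q, Real.dist_eq, Real.dist_eq, abs_of_nonneg (sub_nonneg.2 hqr),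
    abs_of_nonneg (by linarith)]
  linarith

end IsDissipativeOn

/-- With `H (x, q) = q + f x q / N`, the equation reads `p' = N (H (x, p) - p)` along the flow. -/
theorem exists_hasDerivAt_flow_of_isDissipativeOn {X : Type*} [TopologicalSpace X]
    [FirstCountableTopology X] (φ : Flow ℝ X) {f : X → ℝ → ℝ} {l u η N : ℝ} (hlu : l ≤ u)
    (hη : 0 < η) (hN : 0 < N) (hf : ∀ x, IsDissipativeOn (f x) l u η N)
    (hcont : ContinuousOn (Function.uncurry f) (univ ×ˢ Icc l u)) :
    ∃ p : X → ℝ, Continuous p ∧ (∀ x, p x ∈ Icc l u) ∧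
      (∀ x, HasDerivAt (fun s => p (φ s x)) (f x (p x)) 0) ∧
      ∀ σ : C(X, X), (∀ s x, φ s (σ x) = σ (φ s x)) → (∀ x, f (σ x) = f x) →
        ∀ x, p (σ x) = p x := by
  have hfc : Continuous fun y : X × Icc l u => f y.1 y.2 :=
    hcont.comp_continuous (f := fun y : X × Icc l u => (y.1, (y.2 : ℝ))) (by fun_prop)
      fun y => ⟨mem_univ _, y.2.2⟩
  let H : C(X × Icc l u, Icc l u) :=
    ⟨fun y => ⟨y.2 + f y.1 y.2 / N, (hf y.1).add_div_mem hN y.2.2⟩,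
      ((continuous_subtype_val.comp continuous_snd).add (hfc.div_const N)).subtype_mk _⟩
  have hH (x : X) : LipschitzWith (1 - η / N).toNNReal fun q => H (x, q) :=
    .of_dist_le_mul fun q r => ((hf x).dist_add_div_le hN q.2 r.2).trans
      (mul_le_mul_of_nonneg_right (Real.le_coe_toNNReal _) dist_nonneg)
  have hκ : (1 - η / N).toNNReal < 1 := by
    rw [Real.toNNReal_lt_one]
    linarith [div_pos hη hN]
  obtain ⟨p, hp, hunique⟩ := existsUnique_eq_backwardAverage (φ := φ) hN (nonempty_Icc.2 hlu)
    (convex_Icc l u) isClosed_Icc (Metric.isBounded_Icc l u) hκ H hH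
  refine ⟨fun x => p x, by fun_prop, fun x => (p x).2, fun x => ?_, fun σ hσ hfσ x => ?_⟩
  · have hd := hasDerivAt_backwardAverage (φ := φ) hN
      (w := fun y => (H (y, p y) : ℝ)) (by fun_prop)
      ((Metric.isBounded_Icc l u).subset (range_subset_iff.2 fun y => (H (y, p y)).2)) x
    simp only [← hp] at hd
    refine hd.congr_deriv ?_
    simp only [H, ContinuousMap.coe_mk, smul_eq_mul]
    field_simp
    ring
  · have hpσ : p.comp σ = p := hunique _ fun x => by
      have := hp (σ x)
      simp only [backwardAverage, hσ] at this
      simpa [backwardAverage, H, hfσ] using this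
    exact congrArg Subtype.val (DFunLike.congr_fun hpσ x)

lemma isDissipativeOn_one_div_sub {l u β g : ℝ} (hl : 0 < l) (hlu : l ≤ u)
    (hleft : β + g * l ≤ 1 / l) (hright : 1 / u ≤ β + g * u) :
    IsDissipativeOn (fun q => 1 / q - β - g * q) l u (1 / u ^ 2 + g) (1 / l ^ 2 + g) := by
  have hdiff {q r : ℝ} (hq : 0 < q) (hr : 0 < r) :
      (1 / q - β - g * q) - (1 / r - β - g * r) = (1 / (q * r) + g) * (r - q) := by
    field_simp
    ring
  refine ⟨by linarith, by linarith, fun q hq r hr hqr => ?_, fun q hq r hr hqr => ?_⟩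
  all_goals
    have hq0 : 0 < q := hl.trans_le hq.1
    have hr0 : 0 < r := hl.trans_le hr.1
    rw [hdiff hq0 hr0]
    refine mul_le_mul_of_nonneg_right (add_le_add_left (one_div_le_one_div_of_le ?_ ?_) g)
      (sub_nonneg.2 hqr)
  · positivity
  · nlinarith [hq.2, hr.2]
  · positivity
  · nlinarith [hq.1, hr.1]

lemma exists_isDissipativeOn_one_div_sub {b m : ℝ} (hb : 0 < b) (hm : 4 * m < b ^ 2)
    (M G : ℝ) :
    ∃ l u η N : ℝ, 0 < l ∧ l ≤ u ∧ 0 < η ∧ 0 < N ∧ ∀ β ∈ Icc b M, ∀ g ∈ Icc (-m) G,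
      IsDissipativeOn (fun q => 1 / q - β - g * q) l u η N := by
  -- On `(0, 2/b]` one has `1/q² ≥ b²/4 > m`; `Q` is chosen to dominate `β + g q` there.
  set Q := |M| + |G| * (2 / b) + b / 2 with hQ_def
  have hbQ : b / 2 ≤ Q := le_add_of_nonneg_left (by positivity)
  have hQ : 0 < Q := by positivity
  have hlu : 1 / Q ≤ 2 / b := by simpa using one_div_le_one_div_of_le (by positivity) hbQ
  refine ⟨1 / Q, 2 / b, b ^ 2 / 4 - m, Q ^ 2 + |G|, one_div_pos.2 hQ, hlu, by linarith,
    by positivity, fun β hβ g hg => ?_⟩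
  have hleft : β + g * (1 / Q) ≤ 1 / (1 / Q) := by
    have hgQ : g * (1 / Q) ≤ |G| * (2 / b) :=
      mul_le_mul (hg.2.trans (le_abs_self G)) hlu (by positivity) (abs_nonneg G)
    rw [one_div_one_div]
    linarith [hβ.2, le_abs_self M, hQ_def]
  have hright : 1 / (2 / b) ≤ β + g * (2 / b) := by
    have hgu : -m * (2 / b) ≤ g * (2 / b) := by gcongr; exact hg.1
    have hmb : m * (2 / b) ≤ b / 2 := by
      rw [mul_div_assoc', div_le_iff₀ hb]
      linarith
    rw [one_div_div]
    linarith [hβ.1]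
  refine (isDissipativeOn_one_div_sub (by positivity) hlu hleft hright).mono ?_ ?_
  · rw [div_pow, one_div_div]
    linarith [hg.1]
  · rw [div_pow, one_pow, one_div_one_div]
    linarith [hg.2, le_abs_self G]

/-! ### Derivatives along a flow on the line -/

section Field

variable {𝕜 : Type*} [NontriviallyNormedField 𝕜] {F : Type*} [NormedAddCommGroup F]
  [NormedSpace 𝕜 F] {p : 𝕜 → F}

lemma hasDerivAt_of_hasDerivAt_comp [CompleteSpace 𝕜] {γ : 𝕜 → 𝕜} {v s : 𝕜} {d : F}
    (hγ : HasStrictDerivAt γ v s) (hv : v ≠ 0) (hp : HasDerivAt (fun τ => p (γ τ)) d s) :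
    HasDerivAt p (v⁻¹ • d) (γ s) := by
  set θ := hγ.localInverse γ v s hv
  have hγ' := hγ.hasStrictFDerivAt_equiv hv
  have hθ : HasDerivAt θ v⁻¹ (γ s) := (hγ.to_localInverse hv).hasDerivAt
  have hθs : θ (γ s) = s := hγ'.localInverse_apply_image
  rw [← hθs] at hp
  refine (hp.scomp (γ s) hθ).congr_of_eventuallyEq ?_
  filter_upwards [hγ'.eventually_right_inverse] with y hy
  exact congrArg p hy.symm

lemma hasDerivAt_smul_of_eq_zero {f : 𝕜 → 𝕜} {f' t : 𝕜} (hf : HasDerivAt f f' t) (h0 : f t = 0)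
    (hp : ContinuousAt p t) : HasDerivAt (fun y => f y • p y) (f' • p t) t := by
  rw [hasDerivAt_iff_tendsto_slope] at hf ⊢
  refine (hf.smul (hp.tendsto.mono_left nhdsWithin_le_nhds)).congr fun y => ?_
  simp only [slope_def_module, h0, sub_zero, zero_smul, smul_assoc]

end Field

theorem IsFlowOf.hasDerivAt_smul {φ : Flow ℝ ℝ} {A : ℝ → ℝ} {K : ℝ≥0} (hφ : IsFlowOf φ A)
    (hK : LipschitzWith K A) {F : Type*} [NormedAddCommGroup F] [NormedSpace ℝ F] {p : ℝ → F}
    (hp : Continuous p) {A' t : ℝ} (hA : HasDerivAt A A' t) {d : F}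
    (hd : HasDerivAt (fun s => p (φ s t)) d 0) :
    HasDerivAt (fun t => A t • p t) (A' • p t + d) t := by
  rcases eq_or_ne (A t) 0 with h0 | h0
  · have hd0 : d = 0 := by
      simp only [hφ.apply_eq_self_of_eq_zero hK h0] at hd
      exact hd.unique (hasDerivAt_const 0 (p t))
    simpa only [hd0, add_zero] using hasDerivAt_smul_of_eq_zero hA h0 hp.continuousAt
  · have horbit : HasStrictDerivAt (fun s => φ s t) (A (φ 0 t)) 0 :=
      hasStrictDerivAt_of_hasDerivAt_of_continuousAt (Eventually.of_forall (hφ t))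
        (hK.continuous.comp (hφ t).continuous).continuousAt
    have hpt := hasDerivAt_of_hasDerivAt_comp horbit (by rwa [φ.map_zero_apply]) hd
    rw [φ.map_zero_apply] at hpt
    exact (hA.smul hpt).congr_deriv (by rw [smul_inv_smul₀ h0, add_comm])

/-! ### Bounds for periodic functions -/

section PeriodicOrder

variable {α : Type*} [TopologicalSpace α] {T : ℝ}

lemma exists_forall_mem_Icc_of_periodic [LinearOrder α] [OrderClosedTopology α] {f : ℝ → α}
    (hper : Function.Periodic f T) (hT : T ≠ 0) (hf : Continuous f) :
    ∃ s t, ∀ x, f x ∈ Icc (f s) (f t) := by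
  have hcompact := hper.compact_of_continuous hT hf
  obtain ⟨_, ⟨s, rfl⟩, hs⟩ := hcompact.exists_isLeast (range_nonempty f)
  obtain ⟨_, ⟨t, rfl⟩, ht⟩ := hcompact.exists_isGreatest (range_nonempty f)
  exact ⟨s, t, fun x => ⟨hs (mem_range_self x), ht (mem_range_self x)⟩⟩

lemma sInf_image_Icc_le_of_periodic [ConditionallyCompleteLinearOrder α] [ClosedIicTopology α]
    {f : ℝ → α} (hper : Function.Periodic f T) (hT : 0 < T) (hf : Continuous f) (t : ℝ) :
    sInf (f '' Icc 0 T) ≤ f t := by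
  have hrange : f '' Icc 0 T = range f := by simpa using hper.image_Icc hT 0
  rw [hrange]
  exact csInf_le (hper.compact_of_continuous hT.ne' hf).bddBelow (mem_range_self t)

lemma le_sSup_image_Icc_of_periodic [ConditionallyCompleteLinearOrder α] [ClosedIciTopology α]
    {f : ℝ → α} (hper : Function.Periodic f T) (hT : 0 < T) (hf : Continuous f) (t : ℝ) :
    f t ≤ sSup (f '' Icc 0 T) :=
  sInf_image_Icc_le_of_periodic (α := αᵒᵈ) hper hT hf t

end PeriodicOrder

section PeriodicDeriv

variable {F : Type*} [NormedAddCommGroup F] [NormedSpace ℝ F] {f : ℝ → F} {T : ℝ}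

lemma periodic_deriv (hper : Function.Periodic f T) : Function.Periodic (deriv f) T := fun t => by
  rw [← deriv_comp_add_const, funext hper]

lemma exists_lipschitzWith_of_periodic (hper : Function.Periodic f T) (hT : T ≠ 0)
    (hf : ContDiff ℝ 1 f) : ∃ K, LipschitzWith K f := by
  obtain ⟨M, hM⟩ := ((periodic_deriv hper).isBounded_of_continuous hT
    (hf.continuous_deriv le_rfl)).exists_norm_le
  exact ⟨M.toNNReal, lipschitzWith_of_nnnorm_deriv_le (hf.differentiable one_ne_zero) fun t =>
    NNReal.coe_le_coe.1 ((hM _ (mem_range_self t)).trans (Real.le_coe_toNNReal M))⟩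

end PeriodicDeriv

section Periodic

variable {f : ℝ → ℝ} {T : ℝ}

lemma sq_sInf_image_abs_le_of_periodic (hper : Function.Periodic f T) (hT : 0 < T)
    (hf : Continuous f) (t : ℝ) : sInf ((fun t => |f t|) '' Icc 0 T) ^ 2 ≤ f t ^ 2 := by
  rw [← sq_abs (f t)]
  exact pow_le_pow_left₀ (Real.sInf_nonneg (forall_mem_image.2 fun t _ => abs_nonneg (f t)))
    (sInf_image_Icc_le_of_periodic (hper.comp (|·|)) hT hf.abs t) 2

lemma nonneg_of_periodic_of_neg_le_deriv (hper : Function.Periodic f T) (hT : 0 < T)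
    (hf : Differentiable ℝ f) {a : ℝ} (ha : ∀ t, -a ≤ deriv f t) : 0 ≤ a := by
  obtain ⟨ξ, -, hξ⟩ := exists_deriv_eq_zero hT hf.continuous.continuousOn hper.eq.symm
  linarith [ha ξ]

lemma abs_le_mul_of_periodic_of_neg_le_deriv (hper : Function.Periodic f T) (hT : 0 < T)
    (hf : Differentiable ℝ f) {a : ℝ} (ha : ∀ t, -a ≤ deriv f t) {z : ℝ} (hz : f z = 0) (t : ℝ) :
    |f t| ≤ a * T := by
  have ha0 := nonneg_of_periodic_of_neg_le_deriv hper hT hf ha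
  have hslope : ∀ s t, s ≤ t → -a * (t - s) ≤ f t - f s := fun s t hst =>
    mul_sub_le_image_sub_of_le_deriv hf ha hst
  -- There are zeros of `f` within distance `T` of `t` on either side.
  obtain ⟨y, hy, hzy⟩ := hper.exists_mem_Ico hT z t
  obtain ⟨y', hy', hzy'⟩ := hper.exists_mem_Ico hT z (t - T)
  have hafter := hslope t y hy.1
  have hbefore := hslope y' t (by linarith [hy'.2])
  have hay : a * (y - t) ≤ a * T := mul_le_mul_of_nonneg_left (by linarith [hy.2]) ha0
  have hay' : a * (t - y') ≤ a * T := mul_le_mul_of_nonneg_left (by linarith [hy'.1]) ha0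
  rw [abs_le]
  constructor <;> linarith

lemma mul_sub_deriv_le_of_periodic (hper : Function.Periodic f T) (hT : 0 < T)
    (hf : Differentiable ℝ f) {g : ℝ → ℝ} {a c z : ℝ} (hz : f z = 0)
    (ha : ∀ t, -a ≤ deriv f t) (hc : ∀ t, |g t| ≤ c) (t : ℝ) :
    g t * f t - deriv f t ≤ a * (1 + T * c) := by
  have hgf : g t * f t ≤ c * (a * T) := calc
    g t * f t ≤ |g t| * |f t| := (le_abs_self _).trans_eq (abs_mul _ _)
    _ ≤ c * (a * T) := mul_le_mul (hc t)
      (abs_le_mul_of_periodic_of_neg_le_deriv hper hT hf ha hz t) (abs_nonneg _)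
      ((abs_nonneg _).trans (hc t))
  linarith [ha t]

end Periodic

/-! ### The Abel equation -/

theorem exists_pos_periodic_hasDerivAt_mul {T : ℝ} {A β g : ℝ → ℝ} (hT : T ≠ 0)
    (hA : ContDiff ℝ 1 A) (hβ : Continuous β) (hg : Continuous g)
    (hAper : Function.Periodic A T) (hβper : Function.Periodic β T)
    (hgper : Function.Periodic g T) (hβpos : ∀ t, 0 < β t) (hβg : ∀ s t, -4 * g t < β s ^ 2) :
    ∃ p : ℝ → ℝ, Continuous p ∧ Function.Periodic p T ∧ (∀ t, 0 < p t) ∧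
      ∀ t, HasDerivAt (fun t => A t * p t)
        (deriv A t * p t + (1 / p t - β t - g t * p t)) t := by
  obtain ⟨K, hK⟩ := exists_lipschitzWith_of_periodic hAper hT hA
  obtain ⟨φ, hφ⟩ := exists_isFlowOf hA hK
  obtain ⟨s, s', hs⟩ := exists_forall_mem_Icc_of_periodic hβper hT hβ
  obtain ⟨t, t', ht⟩ := exists_forall_mem_Icc_of_periodic hgper hT hg
  obtain ⟨l, u, η, N, hl, hlu, hη, hN, hdiss⟩ :=
    exists_isDissipativeOn_one_div_sub (m := -g t) (hβpos s) (by linarith [hβg s t]) (β s') (g t')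
  have hcont : ContinuousOn (Function.uncurry fun t q => 1 / q - β t - g t * q)
      (univ ×ˢ Icc l u) := by
    have hne : ∀ y ∈ (univ : Set ℝ) ×ˢ Icc l u, y.2 ≠ 0 := fun y hy => (hl.trans_le hy.2.1).ne'
    simp only [Function.uncurry_def]
    fun_prop (disch := assumption)
  obtain ⟨p, hp, hpmem, hpd, hpσ⟩ := exists_hasDerivAt_flow_of_isDissipativeOn φ hlu hη hN
    (fun r => hdiss (β r) (hs r) (g r) (by simpa only [neg_neg] using ht r)) hcont
  refine ⟨p, hp, fun r => ?_, fun r => hl.trans_le (hpmem r).1, fun r => ?_⟩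
  · exact hpσ ⟨(· + T), by fun_prop⟩ (fun s x => hφ.apply_add_period hK hAper s x)
      (fun x => by simp only [ContinuousMap.coe_mk, hβper x, hgper x]) r
  · exact hφ.hasDerivAt_smul hK hp (hA.differentiable one_ne_zero r).hasDerivAt (hpd r)

lemma exists_sq_eq_one_abs_eq_mul {X : Type*} [TopologicalSpace X] [PreconnectedSpace X]
    {B : X → ℝ} (hB : Continuous B) (hB0 : ∀ t, B t ≠ 0) :
    ∃ σ : ℝ, σ ^ 2 = 1 ∧ ∀ t, |B t| = σ * B t := by
  rcases isPreconnected_univ.eq_or_eq_neg_of_sq_eq hB.abs.continuousOn hB.continuousOn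
    (fun t _ => sq_abs (B t)) (fun {t} _ => hB0 t) with h | h
  · exact ⟨1, by norm_num, fun t => by simpa using h (mem_univ t)⟩
  · exact ⟨-1, by norm_num, fun t => by simpa using h (mem_univ t)⟩

theorem abel_periodic_solution_exists_general {T : ℝ} {A B C : ℝ → ℝ} (hT : T ≠ 0)
    (hA : ContDiff ℝ 1 A) (hB : Continuous B) (hC : Continuous C) (hAper : Function.Periodic A T)
    (hBper : Function.Periodic B T) (hCper : Function.Periodic C T) (hB0 : ∀ t, B t ≠ 0)
    (hcond : ∀ s t, 4 * (C t * A t - deriv A t) < B s ^ 2) :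
    ∃ x : ℝ → ℝ, ContDiff ℝ 1 x ∧ Function.Periodic x T ∧
      (∀ t : ℝ, x t * deriv x t = A t + B t * x t + C t * x t ^ 2) ∧
      (∀ t : ℝ, 0 < A t * B t → x t < 0) ∧
      (∀ t : ℝ, A t * B t < 0 → 0 < x t) ∧
      (∀ t : ℝ, x t = 0 ↔ A t = 0) := by
  obtain ⟨σ, hσ, hσB⟩ := exists_sq_eq_one_abs_eq_mul hB hB0
  have hA' := hA.continuous_deriv le_rfl
  obtain ⟨p, hp, hpper, hpos, hd⟩ := exists_pos_periodic_hasDerivAt_mul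
    (β := fun t => |B t|) (g := fun t => deriv A t - C t * A t) hT hA hB.abs
    (hA'.sub (hC.mul hA.continuous)) hAper (hBper.comp (|·|))
    ((periodic_deriv hAper).sub (hCper.mul hAper)) (fun t => abs_pos.2 (hB0 t))
    (fun s t => by rw [sq_abs]; linarith [hcond s t])
  have hx (t : ℝ) : HasDerivAt (fun t => -σ * (A t * p t))
      (-σ * (1 / p t - |B t| + C t * A t * p t)) t :=
    ((hd t).const_mul (-σ)).congr_deriv (by ring)
  have hsign (t : ℝ) : -σ * (A t * p t) * |B t| = -(p t * (A t * B t)) := by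
    rw [hσB]
    linear_combination (-(A t * B t * p t)) * hσ
  refine ⟨fun t => -σ * (A t * p t), ?_, fun t => ?_, fun t => ?_, fun t ht => ?_, fun t ht => ?_,
    fun t => ?_⟩
  · refine contDiff_one_iff_deriv.2 ⟨fun t => (hx t).differentiableAt, ?_⟩
    rw [funext fun t => (hx t).deriv]
    have hp0 (t : ℝ) : p t ≠ 0 := (hpos t).ne'
    have := hA.continuous
    fun_prop (disch := assumption)
  · simp only [hAper t, hpper t]
  · rw [(hx t).deriv, hσB]
    have hp0 := (hpos t).ne'
    field_simp
    linear_combination (A t - A t * p t * (σ * B t)) * hσ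
  · refine neg_of_mul_neg_left ?_ (abs_nonneg (B t))
    rw [hsign]
    exact neg_neg_of_pos (mul_pos (hpos t) ht)
  · refine pos_of_mul_pos_left ?_ (abs_nonneg (B t))
    rw [hsign]
    exact neg_pos.2 (mul_neg_of_pos_of_neg (hpos t) ht)
  · have hσ0 : σ ≠ 0 := by rintro rfl; norm_num at hσ
    simp [hσ0, (hpos t).ne']

/-- Under assumption (H), the Abel equation (N): x·x′ = A(t) + B(t)·x + C(t)·x²
admits a C¹, T-periodic solution x* : ℝ → ℝ which has the sign of −A·B. -/
theorem abel_periodic_solution_exists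
    (T : ℝ) (hT : 0 < T) (A B C : ℝ → ℝ)
    (hA : ContDiff ℝ 1 A) (hB : ContDiff ℝ 1 B) (hC : ContDiff ℝ 1 C)
    (hAper : Function.Periodic A T) (hBper : Function.Periodic B T)
    (hCper : Function.Periodic C T)
    (hzero : ∃ t ∈ Icc (0 : ℝ) T, A t = 0)
    (hcond : (sInf ((fun t => |B t|) '' Icc (0 : ℝ) T)) ^ 2 >
      -4 * sInf ((fun t => deriv A t) '' Icc (0 : ℝ) T) *
        (1 + T * sSup ((fun t => |C t|) '' Icc (0 : ℝ) T))) :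
    ∃ x : ℝ → ℝ, ContDiff ℝ 1 x ∧ Function.Periodic x T ∧
      (∀ t : ℝ, x t * deriv x t = A t + B t * x t + C t * x t ^ 2) ∧
      (∀ t : ℝ, 0 < A t * B t → x t < 0) ∧
      (∀ t : ℝ, A t * B t < 0 → 0 < x t) ∧
      (∀ t : ℝ, x t = 0 ↔ A t = 0) := by
  obtain ⟨z, -, hz⟩ := hzero
  set a' := sInf ((fun t => deriv A t) '' Icc (0 : ℝ) T)
  set c := sSup ((fun t => |C t|) '' Icc (0 : ℝ) T)
  have hdA := hA.differentiable one_ne_zero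
  have ha : ∀ t, - -a' ≤ deriv A t := fun t => (neg_neg a').trans_le <|
    sInf_image_Icc_le_of_periodic (periodic_deriv hAper) hT (hA.continuous_deriv le_rfl) t
  have hc : ∀ t, |C t| ≤ c :=
    le_sSup_image_Icc_of_periodic (hCper.comp (|·|)) hT hC.continuous.abs
  have hb := sq_sInf_image_abs_le_of_periodic hBper hT hB.continuous
  have hm := mul_sub_deriv_le_of_periodic hAper hT hdA hz ha hc
  have hm0 : 0 ≤ -a' * (1 + T * c) :=
    mul_nonneg (nonneg_of_periodic_of_neg_le_deriv hAper hT hdA ha)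
      (by linarith [mul_nonneg hT.le ((abs_nonneg _).trans (hc 0))])
  have hBpos : ∀ s, 0 < B s ^ 2 := fun s => by linarith [hb s]
  exact abel_periodic_solution_exists_general hT.ne' hA hB.continuous hC.continuous hAper hBper
    hCper (fun s => (pow_ne_zero_iff two_ne_zero).1 (hBpos s).ne')
    (fun s t => by linarith [hb s, hm t])
end

section
/- Let S: ℝ × ℝ → ℝ, let m, n ∈ ℝ, and let t₁ < t₂ be real numbers. Let I be an interval containing t₁ and let x: I → ℝ be differentiable with x(t) ≠ 0 and x′(t) = S(t, x(t)) for all t ∈ I. Assume that S(t, m·t + n) > m for every t ∈ [t₁, t₂) with m·t + n ≠ 0, and that x(t₁) ≥ m·t₁ + n. Then x(t) > m·t + n for all t ∈ (t₁, t₂) ∩ I. -/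
/-!
The gap between the solution and the barrier starts nonnegative, and wherever it vanishes the
differential equation gives it a positive derivative. Fencing from the left endpoint therefore keeps
the gap nonnegative. A zero at a later time would then be a minimum, and approaching a minimum from
the left forces a nonpositive derivative, which is a contradiction.
-/

open Set Filter Topology

theorem hasDerivWithinAt_nonpos_of_isLocalMinOn_right {f : ℝ → ℝ} {f' a b : ℝ} {s : Set ℝ}
    (hab : a < b) (hs : Icc a b ⊆ s) (hmin : IsLocalMinOn f s b)
    (hf : HasDerivWithinAt f f' s b) : f' ≤ 0 := by
  have hcone : a - b ∈ posTangentConeAt s b :=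
    sub_mem_posTangentConeAt_of_segment_subset <| by rwa [segment_symm, segment_eq_Icc hab.le]
  have hdir : 0 ≤ (a - b) * f' := by
    simpa using hmin.hasFDerivWithinAt_nonneg hf.hasFDerivWithinAt hcone
  exact nonpos_of_mul_nonneg_right hdir (sub_neg.2 hab)

section PositiveDerivativeAtZeros

variable {u u' : ℝ → ℝ} {a b : ℝ}

theorem nonneg_of_deriv_right_pos_of_eq_zero (hcont : ContinuousOn u (Icc a b))
    (hu : ∀ t ∈ Ico a b, HasDerivWithinAt u (u' t) (Ici t) t) (ha : 0 ≤ u a)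
    (hpos : ∀ t ∈ Ico a b, u t = 0 → 0 < u' t) : ∀ t ∈ Icc a b, 0 ≤ u t :=
  image_le_of_deriv_right_lt_deriv_boundary' continuousOn_const
    (fun t _ => hasDerivWithinAt_const t (Ici t) 0) ha hcont hu
    (fun t ht hzero => hpos t ht hzero.symm)

theorem pos_of_hasDerivWithinAt_pos_of_eq_zero
    (hu : ∀ t ∈ Icc a b, HasDerivWithinAt u (u' t) (Icc a b) t) (ha : 0 ≤ u a)
    (hpos : ∀ t ∈ Icc a b, u t = 0 → 0 < u' t) : ∀ t ∈ Ioc a b, 0 < u t := by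
  have hright : ∀ t ∈ Ico a b, HasDerivWithinAt u (u' t) (Ici t) t := fun t ht =>
    (hu t (Ico_subset_Icc_self ht)).mono_of_mem_nhdsWithin (Icc_mem_nhdsGE_of_mem ht)
  have hnonneg : ∀ t ∈ Icc a b, 0 ≤ u t :=
    nonneg_of_deriv_right_pos_of_eq_zero (fun t ht => (hu t ht).continuousWithinAt) hright ha
      (fun t ht => hpos t (Ico_subset_Icc_self ht))
  intro t ht
  have htI : t ∈ Icc a b := Ioc_subset_Icc_self ht
  refine (hnonneg t htI).lt_of_ne' fun hzero => (hpos t htI hzero).not_ge ?_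
  have hmin : IsMinOn u (Icc a b) t := fun s hs => hzero.trans_le (hnonneg s hs)
  exact hasDerivWithinAt_nonpos_of_isLocalMinOn_right ht.1 (Icc_subset_Icc_right ht.2) hmin.localize
    (hu t htI)

end PositiveDerivativeAtZeros

theorem solution_stays_above_line_general {S : ℝ → ℝ → ℝ} {U : Set (ℝ × ℝ)} {x φ φ' : ℝ → ℝ}
    {t₁ t₂ : ℝ} {I : Set ℝ} (hI : I.OrdConnected) (ht₁I : t₁ ∈ I)
    (hx : ∀ t ∈ I, (t, x t) ∈ U ∧ HasDerivWithinAt x (S t (x t)) I t)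
    (hφ : ∀ t ∈ I, HasDerivWithinAt φ (φ' t) I t)
    (hS : ∀ t ∈ Ico t₁ t₂, (t, φ t) ∈ U → φ' t < S t (φ t)) (hinit : φ t₁ ≤ x t₁) :
    ∀ t ∈ Ioo t₁ t₂ ∩ I, φ t < x t := by
  rintro t ⟨⟨ht₁t, htt₂⟩, htI⟩
  have hsub : Icc t₁ t ⊆ I := hI.out ht₁I htI
  have hgap : ∀ s ∈ Icc t₁ t,
      HasDerivWithinAt (fun r => x r - φ r) (S s (x s) - φ' s) (Icc t₁ t) s :=
    fun s hs => ((hx s (hsub hs)).2.sub (hφ s (hsub hs))).mono hsub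
  have hcontact : ∀ s ∈ Icc t₁ t, x s - φ s = 0 → 0 < S s (x s) - φ' s := by
    intro s hs hzero
    have heq : x s = φ s := sub_eq_zero.1 hzero
    rw [heq, sub_pos]
    exact hS s ⟨hs.1, hs.2.trans_lt htt₂⟩ (heq ▸ (hx s (hsub hs)).1)
  exact sub_pos.1 <|
    pos_of_hasDerivWithinAt_pos_of_eq_zero hgap (sub_nonneg.2 hinit) hcontact t ⟨ht₁t, le_rfl⟩

/-- comparison lemma (Lemma 1.i): a solution of x′ = S(t,x) starting on or above
the line x = m·t + n stays strictly above it on (t₁,t₂), provided S > m on the line there. -/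
theorem solution_stays_above_line
    (S : ℝ → ℝ → ℝ) (m n t₁ t₂ : ℝ) (ht : t₁ < t₂)
    (I : Set ℝ) (hI : I.OrdConnected) (ht₁I : t₁ ∈ I)
    (x : ℝ → ℝ)
    (hx : ∀ t ∈ I, x t ≠ 0 ∧ HasDerivWithinAt x (S t (x t)) I t)
    (hS : ∀ t ∈ Ico t₁ t₂, m * t + n ≠ 0 → m < S t (m * t + n))
    (hinit : m * t₁ + n ≤ x t₁) :
    ∀ t ∈ Ioo t₁ t₂ ∩ I, m * t + n < x t :=
  solution_stays_above_line_general (U := {p | p.2 ≠ 0}) (φ := fun t => m * t + n) hI ht₁I hx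
    (fun t _ => ((hasDerivWithinAt_id t I).const_mul m).add_const n |>.congr_deriv (mul_one m))
    hS hinit
end

section
/- Let S: ℝ × ℝ → ℝ, let m, n ∈ ℝ, and let t₁ < t₂ be real numbers. Let I be an interval containing t₁ and let x: I → ℝ be differentiable with x(t) ≠ 0 and x′(t) = S(t, x(t)) for all t ∈ I. Assume that S(t, m·t + n) < m for every t ∈ [t₁, t₂) with m·t + n ≠ 0, and that x(t₁) ≤ m·t₁ + n. Then x(t) < m·t + n for all t ∈ (t₁, t₂) ∩ I. -/
/-!
At a contact time with the barrier the solution has the smaller slope, so it cannot cross upwards,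
and the fencing theorem gives the weak inequality. Nor can the two touch at a later time: a smaller
slope there would put the solution strictly above the barrier immediately to the left.
-/

open Set Filter Topology

theorem eventually_lt_nhdsLT_of_hasDerivWithinAt_neg {f : ℝ → ℝ} {f' a : ℝ}
    (hf : HasDerivWithinAt f f' (Iio a) a) (hf' : f' < 0) : ∀ᶠ z in 𝓝[<] a, f a < f z := by
  have slope_neg : ∀ᶠ z in 𝓝[<] a, slope f a z < 0 :=
    hf.limsup_slope_le' self_notMem_Iio hf'
  filter_upwards [slope_neg, self_mem_nhdsWithin] with z hz (hza : z < a)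
  rw [slope_def_field, div_lt_iff_of_neg (sub_neg.2 hza), zero_mul] at hz
  exact sub_pos.1 hz

section Fencing

variable {f f' B B' : ℝ → ℝ} {a b : ℝ}

theorem image_le_of_hasDerivWithinAt_Icc_lt_boundary
    (hf : ∀ t ∈ Icc a b, HasDerivWithinAt f (f' t) (Icc a b) t)
    (hB : ∀ t ∈ Icc a b, HasDerivWithinAt B (B' t) (Icc a b) t)
    (ha : f a ≤ B a) (bound : ∀ t ∈ Ico a b, f t = B t → f' t < B' t) :
    ∀ t ∈ Icc a b, f t ≤ B t :=
  image_le_of_deriv_right_lt_deriv_boundary' (HasDerivWithinAt.continuousOn hf)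
    (fun t ht => (hf t (Ico_subset_Icc_self ht)).mono_of_mem_nhdsWithin (Icc_mem_nhdsGE_of_mem ht))
    ha (HasDerivWithinAt.continuousOn hB)
    (fun t ht => (hB t (Ico_subset_Icc_self ht)).mono_of_mem_nhdsWithin (Icc_mem_nhdsGE_of_mem ht))
    bound

theorem image_lt_of_hasDerivWithinAt_Icc_lt_boundary
    (hf : ∀ t ∈ Icc a b, HasDerivWithinAt f (f' t) (Icc a b) t)
    (hB : ∀ t ∈ Icc a b, HasDerivWithinAt B (B' t) (Icc a b) t)
    (ha : f a ≤ B a) (bound : ∀ t ∈ Icc a b, f t = B t → f' t < B' t) :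
    ∀ t ∈ Ioc a b, f t < B t := by
  intro t ht
  have f_le_B : ∀ z ∈ Icc a b, f z ≤ B z :=
    image_le_of_hasDerivWithinAt_Icc_lt_boundary hf hB ha
      fun z hz => bound z (Ico_subset_Icc_self hz)
  have ht' : t ∈ Icc a b := Ioc_subset_Icc_self ht
  refine (f_le_B t ht').lt_of_ne fun contact => ?_
  have left_deriv : HasDerivWithinAt (f - B) (f' t - B' t) (Iio t) t :=
    ((hf t ht').sub (hB t ht')).mono_of_mem_nhdsWithin (Icc_mem_nhdsLT_of_mem ht)
  have above_left : ∀ᶠ z in 𝓝[<] t, (f - B) t < (f - B) z :=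
    eventually_lt_nhdsLT_of_hasDerivWithinAt_neg left_deriv (sub_neg.2 (bound t ht' contact))
  obtain ⟨z, hz, hzI⟩ := (above_left.and (Icc_mem_nhdsLT_of_mem ht)).exists
  have B_lt_f : B z < f z := by simpa [contact] using hz
  exact (f_le_B z hzI).not_gt B_lt_f

end Fencing

theorem solution_stays_below_line_general
    {S : ℝ → ℝ → ℝ} {D : Set (ℝ × ℝ)} {I : Set ℝ} {x B B' : ℝ → ℝ} {t₁ t₂ : ℝ}
    (hI : I.OrdConnected) (ht₁I : t₁ ∈ I)
    (hx : ∀ t ∈ I, (t, x t) ∈ D ∧ HasDerivWithinAt x (S t (x t)) I t)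
    (hB : ∀ t ∈ I, HasDerivWithinAt B (B' t) I t)
    (hS : ∀ t ∈ Ico t₁ t₂ ∩ I, (t, B t) ∈ D → S t (B t) < B' t)
    (hinit : x t₁ ≤ B t₁) :
    ∀ t ∈ Ioo t₁ t₂ ∩ I, x t < B t := by
  rintro t ⟨⟨ht₁, ht₂⟩, htI⟩
  have Icc_subset_I : Icc t₁ t ⊆ I := hI.out ht₁I htI
  have slope_lt : ∀ s ∈ Icc t₁ t, x s = B s → S s (x s) < B' s := by
    intro s hs contact
    have hsI : s ∈ I := Icc_subset_I hs
    have hBD : (s, B s) ∈ D := contact ▸ (hx s hsI).1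
    simpa only [contact] using hS s ⟨⟨hs.1, hs.2.trans_lt ht₂⟩, hsI⟩ hBD
  exact image_lt_of_hasDerivWithinAt_Icc_lt_boundary
    (fun s hs => (hx s (Icc_subset_I hs)).2.mono Icc_subset_I)
    (fun s hs => (hB s (Icc_subset_I hs)).mono Icc_subset_I)
    hinit slope_lt t (right_mem_Ioc.2 ht₁)

/-- comparison lemma (Lemma 1.ii): a solution of x′ = S(t,x) starting on or below
the line x = m·t + n stays strictly below it on (t₁,t₂), provided S < m on the line there. -/
theorem solution_stays_below_line
    (S : ℝ → ℝ → ℝ) (m n t₁ t₂ : ℝ) (ht : t₁ < t₂)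
    (I : Set ℝ) (hI : I.OrdConnected) (ht₁I : t₁ ∈ I)
    (x : ℝ → ℝ)
    (hx : ∀ t ∈ I, x t ≠ 0 ∧ HasDerivWithinAt x (S t (x t)) I t)
    (hS : ∀ t ∈ Ico t₁ t₂, m * t + n ≠ 0 → S t (m * t + n) < m)
    (hinit : x t₁ ≤ m * t₁ + n) :
    ∀ t ∈ Ioo t₁ t₂ ∩ I, x t < m * t + n :=
  solution_stays_below_line_general (D := {p | p.2 ≠ 0}) hI ht₁I hx
    (fun _ _ => ((hasDerivAt_const_mul m).add_const n).hasDerivWithinAt)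
    (fun t ht => hS t ht.1) hinit
end

section
/- Let T > 0 and let A: ℝ → ℝ be a C¹, T-periodic function having at least one zero. Then −T·(min_{t∈[0,T]} A′(t)) ≥ max_{t∈[0,T]} |A(t)|. -/
open Set Filter Topology

/-!
For any `x` and `y`, periodicity replaces `y` by a point `z ∈ [x, x + T)` with `f z = f y`. If
`f' ≥ c`, where necessarily `c ≤ 0`, then `f` decreases by at most `-c * (z - x) ≤ -T * c` from `x`
to `z`. Hence the oscillation of `f` is at most `-T * c`, and it bounds `|f|` as soon as `f` has a
zero.
-/

theorem periodic_deriv_s3 {𝕜 F : Type*} [NontriviallyNormedField 𝕜] [NormedAddCommGroup F]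
    [NormedSpace 𝕜 F] {f : 𝕜 → F} {T : 𝕜} (hf : Function.Periodic f T) :
    Function.Periodic (deriv f) T := fun x ↦ by
  rw [← deriv_comp_add_const, funext hf]

section OneSidedLipschitz

variable {R : Type*} [Ring R] [LinearOrder R] [IsStrictOrderedRing R] {f : R → R} {T c : R}

theorem nonpos_of_periodic_of_mul_sub_le (hT : 0 < T) (hf : Function.Periodic f T)
    (hc : ∀ ⦃x y⦄, x ≤ y → c * (y - x) ≤ f y - f x) : c ≤ 0 := by
  have h : c * T ≤ 0 := by simpa [hf.eq] using hc hT.le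
  exact nonpos_of_mul_nonpos_left h hT

theorem abs_sub_le_of_periodic_of_mul_sub_le [Archimedean R] (hT : 0 < T)
    (hf : Function.Periodic f T) (hc : ∀ ⦃x y⦄, x ≤ y → c * (y - x) ≤ f y - f x) (x y : R) :
    |f x - f y| ≤ -c * T := by
  have sub_le (x y : R) : f x - f y ≤ -c * T := by
    obtain ⟨z, ⟨hxz, hzx⟩, hyz⟩ := hf.exists_mem_Ico hT y x
    calc f x - f y = -(f z - f x) := by rw [hyz, neg_sub]
      _ ≤ -(c * (z - x)) := neg_le_neg (hc hxz)
      _ = -c * (z - x) := (neg_mul _ _).symm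
      _ ≤ -c * T := mul_le_mul_of_nonneg_left (sub_le_iff_le_add'.2 hzx.le)
        (neg_nonneg.2 (nonpos_of_periodic_of_mul_sub_le hT hf hc))
  exact abs_sub_le_iff.2 ⟨sub_le x y, sub_le y x⟩

end OneSidedLipschitz

theorem periodic_with_zero_bound_general {T : ℝ} (hT : 0 < T) {A : ℝ → ℝ}
    (hA : Differentiable ℝ A) (hbdd : BddBelow (deriv A '' Icc 0 T))
    (hAper : Function.Periodic A T) (hzero : ∃ t₀, A t₀ = 0) :
    sSup ((fun t ↦ |A t|) '' Icc 0 T) ≤ -T * sInf (deriv A '' Icc 0 T) := by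
  obtain ⟨t₀, ht₀⟩ := hzero
  have himage : deriv A '' Icc 0 T = range (deriv A) := by
    simpa only [zero_add] using (periodic_deriv_s3 hAper).image_Icc hT 0
  have hinf (t : ℝ) : sInf (deriv A '' Icc 0 T) ≤ deriv A t :=
    csInf_le hbdd (himage ▸ mem_range_self t)
  refine csSup_le ((nonempty_Icc.2 hT.le).image _) (forall_mem_image.2 fun t _ ↦ ?_)
  have hosc := abs_sub_le_of_periodic_of_mul_sub_le hT hAper
    (mul_sub_le_image_sub_of_le_deriv hA hinf) t t₀
  rwa [ht₀, sub_zero, neg_mul_comm, mul_comm] at hosc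

/-- if A is C¹, T-periodic and has a zero, then
−T·(min_{[0,T]} A′) ≥ max_{[0,T]} |A|. -/
theorem periodic_with_zero_bound
    (T : ℝ) (hT : 0 < T) (A : ℝ → ℝ) (hA : ContDiff ℝ 1 A)
    (hAper : Function.Periodic A T) (hzero : ∃ t₀ : ℝ, A t₀ = 0) :
    -T * sInf ((fun t => deriv A t) '' Icc (0 : ℝ) T) ≥
      sSup ((fun t => |A t|) '' Icc (0 : ℝ) T) :=
  periodic_with_zero_bound_general hT (hA.differentiable one_ne_zero)
    (isCompact_Icc.image (hA.continuous_deriv le_rfl)).bddBelow hAper hzero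
end

section
/- Assume (H) and that B(t) > 0 for all t. Let a < b be real numbers with A(a) = A(b) = 0 and A(t) > 0 for all t ∈ (a, b). Let x be a solution of (N) on [t₁, t₂) with a ≤ t₁ < t₂ ≤ b and x(t) < 0 for all t ∈ [t₁, t₂). Then there exists a solution x̃ of (N) on [t₁, b) with x̃(t) < 0 for all t ∈ [t₁, b) and x̃(t) = x(t) for all t ∈ [t₁, t₂). -/
open Set Filter Topology

/-!
For `x ≠ 0` equation (N) reads `x' = A / x + B + C x`. Where `A > 0`, this field is negative at
every level `m < 0` close enough to `0`, so a negative solution that starts below `m` stays below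
`m`. Below `m` the field is Lipschitz with linear growth, so there is no blow-up either, and
negative solutions exist on every compact interval on which `A > 0`. Since they are unique, they
glue to a solution on `[s, b)`.

As `A` may vanish at `t₁`, the given solution is continued from a time `s` strictly between
`t₁` and `t₂`.
-/

open scoped NNReal

section IntegralCurves

variable {E : Type*} [NormedAddCommGroup E] [NormedSpace ℝ E] {v : ℝ → E → E}

lemma hasDerivWithinAt_Ici_of_isIntegralCurveOn_Icc {γ : ℝ → E} {s c t : ℝ}
    (hγ : IsIntegralCurveOn γ v (Icc s c)) (ht : t ∈ Ico s c) :
    HasDerivWithinAt γ (v t (γ t)) (Ici t) t :=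
  (hγ t (Ico_subset_Icc_self ht)).mono_of_mem_nhdsWithin
    (mem_of_superset (Icc_mem_nhdsGE ht.2) (Icc_subset_Icc_left ht.1))

lemma exists_isIntegralCurveOn_of_cover {ι : Type*} {γ : ι → ℝ → E} {u : ι → Set ℝ} {s : Set ℝ}
    (hγ : ∀ i, IsIntegralCurveOn (γ i) v (u i))
    (hcompat : ∀ i j, EqOn (γ i) (γ j) (u i ∩ u j))
    (hcover : ∀ t ∈ s, ∃ i, u i ∈ 𝓝[s] t) :
    ∃ Γ : ℝ → E, IsIntegralCurveOn Γ v s ∧ ∀ i, EqOn Γ (γ i) (u i) := by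
  classical
  let Γ : ℝ → E := fun t => if h : ∃ i, t ∈ u i then γ h.choose t else 0
  have hΓ : ∀ i, EqOn Γ (γ i) (u i) := fun i t ht => by
    have h : ∃ i, t ∈ u i := ⟨i, ht⟩
    simpa only [Γ, dif_pos h] using hcompat h.choose i ⟨h.choose_spec, ht⟩
  refine ⟨Γ, fun t ht => ?_, hΓ⟩
  obtain ⟨i, hi⟩ := hcover t ht
  have hti : t ∈ u i := mem_of_mem_nhdsWithin ht hi
  rw [hΓ i hti]
  exact ((hγ i t hti).mono_of_mem_nhdsWithin hi).congr_of_eventuallyEq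
    (mem_of_superset hi (hΓ i)) (hΓ i hti)

lemma exists_isIntegralCurveOn_Icc_of_lipschitz_of_bounded [CompleteSpace E] {s c : ℝ}
    (hsc : s ≤ c) {K : ℝ≥0} {L : ℝ} (hlip : ∀ t ∈ Icc s c, LipschitzWith K (v t))
    (hcont : ∀ x, ContinuousOn (v · x) (Icc s c)) (hbdd : ∀ t ∈ Icc s c, ∀ x, ‖v t x‖ ≤ L)
    (x₀ : E) : ∃ γ : ℝ → E, γ s = x₀ ∧ IsIntegralCurveOn γ v (Icc s c) := by
  have hpl : IsPicardLindelof v (⟨s, left_mem_Icc.2 hsc⟩ : Icc s c) x₀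
      (L.toNNReal * (c - s).toNNReal) 0 L.toNNReal K :=
    { lipschitzOnWith := fun t ht => (hlip t ht).lipschitzOnWith
      continuousOn := fun x _ => hcont x
      norm_le := fun t ht x _ => (hbdd t ht x).trans (Real.le_coe_toNNReal L)
      mul_max_le := by simp [hsc] }
  exact hpl.exists_eq_forall_mem_Icc_hasDerivWithinAt₀

lemma exists_isIntegralCurveOn_Icc_of_lipschitz {v : ℝ → ℝ → ℝ} {s c : ℝ} (hsc : s ≤ c) {K : ℝ≥0}
    (hlip : ∀ t ∈ Icc s c, LipschitzWith K (v t)) (hcont : ∀ x, ContinuousOn (v · x) (Icc s c))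
    (x₀ : ℝ) : ∃ γ : ℝ → ℝ, γ s = x₀ ∧ IsIntegralCurveOn γ v (Icc s c) := by
  obtain ⟨M, hM⟩ := isCompact_Icc.exists_bound_of_continuousOn (hcont 0)
  have hM₀ : 0 ≤ M := (norm_nonneg _).trans (hM s (left_mem_Icc.2 hsc))
  have hgrowth : ∀ t ∈ Icc s c, ∀ x, ‖v t x‖ ≤ K * ‖x‖ + M := fun t ht x => by
    have hdist : ‖v t x - v t 0‖ ≤ K * ‖x‖ := by
      simpa only [dist_eq_norm, sub_zero] using (hlip t ht).dist_le_mul x 0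
    linarith [norm_le_norm_sub_add (v t x) (v t 0), hM t ht]
  -- Clamping `x` to `[-R, R]` makes the field bounded; by Grönwall the clamped solution never
  -- leaves `[-R, R]`, so the clamping is invisible to it.
  have hmono : Monotone (gronwallBound ‖x₀‖ K M) := gronwallBound_mono (norm_nonneg _) hM₀ K.2
  set R : ℝ := gronwallBound ‖x₀‖ K M (c - s)
  have hR : 0 ≤ R := by
    have := hmono (sub_nonneg.2 hsc)
    rw [gronwallBound_x0] at this
    exact (norm_nonneg _).trans this
  let φ : ℝ → ℝ := fun x => projIcc (-R) R (neg_le_self hR) x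
  have hφR : ∀ x, ‖φ x‖ ≤ R := fun x => abs_le.2 (projIcc (-R) R _ x).2
  have hφ : ∀ x, ‖φ x‖ ≤ ‖x‖ := fun x => by
    simp only [φ, coe_projIcc, Real.norm_eq_abs]
    grind
  have hφ_of_le : ∀ x, ‖x‖ ≤ R → φ x = x := fun x hx => by
    simp only [φ, projIcc_of_mem _ (abs_le.1 hx : x ∈ Icc (-R) R)]
  obtain ⟨γ, hγs, hγ⟩ := exists_isIntegralCurveOn_Icc_of_lipschitz_of_bounded
    (v := fun t x => v t (φ x)) hsc (L := K * R + M)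
    (fun t ht => (hlip t ht).comp (LipschitzWith.subtype_val _ |>.comp (LipschitzWith.projIcc _)))
    (fun x => hcont (φ x))
    (fun t ht x => (hgrowth t ht (φ x)).trans (by gcongr; exact hφR x)) x₀
  have hγR : ∀ t ∈ Icc s c, ‖γ t‖ ≤ R := fun t ht =>
    (norm_le_gronwallBound_of_norm_deriv_right_le hγ.continuousOn
      (fun r hr => hasDerivWithinAt_Ici_of_isIntegralCurveOn_Icc hγ hr) (by rw [hγs])
      (fun r hr => (hgrowth r (Ico_subset_Icc_self hr) _).trans (by gcongr; exact hφ _)) t ht).trans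
      (hmono (sub_le_sub_right ht.2 s))
  exact ⟨γ, hγs, fun t ht => by simpa only [hφ_of_le _ (hγR t ht)] using hγ t ht⟩

end IntegralCurves

/-- The field `A / x + B + C x` of equation (N) solved for `x′`. It represents (N) only where
`x ≠ 0`: at `x = 0` the quotient has the junk value `0`. -/
noncomputable def abelField (A B C : ℝ → ℝ) (t x : ℝ) : ℝ :=
  A t / x + B t + C t * x

section AbelField

variable {A B C : ℝ → ℝ}

lemma eq_abelField_iff {t x p : ℝ} (hx : x ≠ 0) :
    p = abelField A B C t x ↔ x * p = A t + B t * x + C t * x ^ 2 := by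
  have hmul : x * abelField A B C t x = A t + B t * x + C t * x ^ 2 := by
    rw [abelField]
    field_simp
  rw [← hmul, mul_right_inj' hx]

lemma exists_lipschitzOnWith_abelField {S : Set ℝ} (hS : IsCompact S) (hA : ContinuousOn A S)
    (hC : ContinuousOn C S) {m : ℝ} (hm : m < 0) :
    ∃ K : ℝ≥0, ∀ t ∈ S, LipschitzOnWith K (abelField A B C t) (Iic m) := by
  obtain ⟨M, hM⟩ := hS.exists_bound_of_continuousOn hA
  obtain ⟨N, hN⟩ := hS.exists_bound_of_continuousOn hC
  refine ⟨(N + M / m ^ 2).toNNReal, fun t ht => .of_dist_le_mul fun x hx y hy => ?_⟩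
  have hx₀ : x < 0 := hx.trans_lt hm
  have hy₀ : y < 0 := hy.trans_lt hm
  have hxy : m ^ 2 ≤ |x * y| := by
    rw [abs_of_pos (mul_pos_of_neg_of_neg hx₀ hy₀)]
    nlinarith [mem_Iic.1 hx, mem_Iic.1 hy]
  have hM₀ : 0 ≤ M := (norm_nonneg _).trans (hM t ht)
  have hslope : |C t - A t / (x * y)| ≤ N + M / m ^ 2 := by
    refine (abs_sub _ _).trans (add_le_add (hN t ht) ?_)
    rw [abs_div]
    have := sq_pos_of_neg hm
    gcongr
    exact hM t ht
  have hdiff : abelField A B C t x - abelField A B C t y = (C t - A t / (x * y)) * (x - y) := by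
    have := hx₀.ne
    have := hy₀.ne
    simp only [abelField]
    field_simp
    ring
  rw [Real.dist_eq, Real.dist_eq, hdiff, abs_mul]
  gcongr
  exact hslope.trans (Real.le_coe_toNNReal _)

lemma exists_abelField_neg {S : Set ℝ} (hS : IsCompact S) (hA : ContinuousOn A S)
    (hB : ContinuousOn B S) (hC : ContinuousOn C S) (hApos : ∀ t ∈ S, 0 < A t) {x₀ : ℝ}
    (hx₀ : x₀ < 0) : ∃ m ∈ Ico x₀ 0, ∀ t ∈ S, abelField A B C t m < 0 := by
  obtain ⟨M, hM⟩ := hS.exists_bound_of_continuousOn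
    ((hB.abs.add hC.abs).div hA fun t ht => (hApos t ht).ne')
  set ε : ℝ := min (-x₀) (1 / (|M| + 1))
  have hε : 0 < ε := lt_min (neg_pos.2 hx₀) (by positivity)
  have hε₁ : ε ≤ 1 := (min_le_right _ _).trans (div_le_one_of_le₀ (by simp) (by positivity))
  refine ⟨-ε, ⟨le_neg.1 (min_le_left _ _), neg_neg_of_pos hε⟩, fun t ht => ?_⟩
  have hAt := hApos t ht
  have hBC : |B t| + |C t| ≤ |M| * A t := by
    rw [← div_le_iff₀ hAt]
    exact (le_abs_self _).trans ((hM t ht).trans (le_abs_self _))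
  have hsing : (|M| + 1) * A t ≤ A t / ε := by
    rw [le_div_iff₀ hε, mul_right_comm]
    refine mul_le_of_le_one_left hAt.le ?_
    rw [mul_comm, ← le_div_iff₀ (by positivity)]
    exact min_le_right _ _
  have hCε : -C t * ε ≤ |C t| :=
    (mul_le_mul_of_nonneg_right (neg_le_abs _) hε.le).trans
      (mul_le_of_le_one_right (abs_nonneg _) hε₁)
  calc abelField A B C t (-ε) = -(A t / ε) + B t + -C t * ε := by
        rw [abelField, div_neg, mul_neg, neg_mul]
    _ < 0 := by linarith [le_abs_self (B t)]

lemma eqOn_of_isIntegralCurveOn_abelField {I : Set ℝ} (hI : I.OrdConnected)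
    (hA : ContinuousOn A I) (hC : ContinuousOn C I) {y z : ℝ → ℝ}
    (hy : IsIntegralCurveOn y (abelField A B C) I) (hyneg : ∀ t ∈ I, y t < 0)
    (hz : IsIntegralCurveOn z (abelField A B C) I) (hzneg : ∀ t ∈ I, z t < 0)
    {s : ℝ} (hs : s ∈ I) (hyz : y s = z s) : EqOn y z (I ∩ Ici s) := by
  rintro c ⟨hc, hsc : s ≤ c⟩
  have hsub : Icc s c ⊆ I := hI.out hs hc
  have hyc := hy.mono hsub
  have hzc := hz.mono hsub
  obtain ⟨r, hr, hmax⟩ := isCompact_Icc.exists_isMaxOn (nonempty_Icc.2 hsc)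
    (ContinuousOn.sup hyc.continuousOn hzc.continuousOn)
  have hle : ∀ t ∈ Icc s c, y t ≤ max (y r) (z r) ∧ z t ≤ max (y r) (z r) :=
    fun t ht => max_le_iff.1 (hmax ht)
  have hm : max (y r) (z r) < 0 := max_lt (hyneg r (hsub hr)) (hzneg r (hsub hr))
  obtain ⟨K, hK⟩ := exists_lipschitzOnWith_abelField (B := B) isCompact_Icc (hA.mono hsub)
    (hC.mono hsub) hm
  exact ODE_solution_unique_of_mem_Icc_right (s := fun _ => Iic (max (y r) (z r)))
    (fun t ht => hK t (Ico_subset_Icc_self ht))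
    hyc.continuousOn (fun _ => hasDerivWithinAt_Ici_of_isIntegralCurveOn_Icc hyc)
    (fun t ht => (hle t (Ico_subset_Icc_self ht)).1)
    hzc.continuousOn (fun _ => hasDerivWithinAt_Ici_of_isIntegralCurveOn_Icc hzc)
    (fun t ht => (hle t (Ico_subset_Icc_self ht)).2)
    hyz (right_mem_Icc.2 hsc)

lemma exists_neg_isIntegralCurveOn_abelField_Icc {s c : ℝ} (hsc : s ≤ c)
    (hA : ContinuousOn A (Icc s c)) (hB : ContinuousOn B (Icc s c))
    (hC : ContinuousOn C (Icc s c)) (hApos : ∀ t ∈ Icc s c, 0 < A t) {x₀ : ℝ} (hx₀ : x₀ < 0) :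
    ∃ z : ℝ → ℝ, z s = x₀ ∧ IsIntegralCurveOn z (abelField A B C) (Icc s c) ∧
      ∀ t ∈ Icc s c, z t < 0 := by
  obtain ⟨m, ⟨hx₀m, hm⟩, hlevel⟩ := exists_abelField_neg isCompact_Icc hA hB hC hApos hx₀
  obtain ⟨K, hK⟩ := exists_lipschitzOnWith_abelField (B := B) isCompact_Icc hA hC hm
  obtain ⟨z, hzs, hz⟩ := exists_isIntegralCurveOn_Icc_of_lipschitz hsc
    (v := fun t x => abelField A B C t (min x m))
    (fun t ht => lipschitzOnWith_univ.1 <| (hK t ht).comp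
      (LipschitzWith.id.min_const m).lipschitzOnWith fun x _ => min_le_right x m)
    (fun x => ((hA.div_const _).add hB).add (hC.mul_const _)) x₀
  have hzm : ∀ ⦃t⦄, t ∈ Icc s c → z t ≤ m :=
    image_le_of_deriv_right_lt_deriv_boundary' hz.continuousOn
      (fun _ => hasDerivWithinAt_Ici_of_isIntegralCurveOn_Icc hz) (hzs.trans_le hx₀m)
      continuousOn_const (fun t _ => hasDerivWithinAt_const t (Ici t) m) fun t ht htm => by
        simpa only [htm, min_self] using hlevel t (Ico_subset_Icc_self ht)
  refine ⟨z, hzs, fun t ht => ?_, fun t ht => (hzm ht).trans_lt hm⟩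
  simpa only [min_eq_left (hzm ht)] using hz t ht

lemma exists_neg_isIntegralCurveOn_abelField_Ico {s b : ℝ} (hsb : s < b)
    (hA : ContinuousOn A (Ico s b)) (hB : ContinuousOn B (Ico s b))
    (hC : ContinuousOn C (Ico s b)) (hApos : ∀ t ∈ Ico s b, 0 < A t) {x₀ : ℝ} (hx₀ : x₀ < 0) :
    ∃ z : ℝ → ℝ, z s = x₀ ∧ IsIntegralCurveOn z (abelField A B C) (Ico s b) ∧
      ∀ t ∈ Ico s b, z t < 0 := by
  have hsub (c : Ico s b) : Icc s c.1 ⊆ Ico s b := Icc_subset_Ico_right c.2.2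
  have hexists (c : Ico s b) := exists_neg_isIntegralCurveOn_abelField_Icc c.2.1
    (hA.mono (hsub c)) (hB.mono (hsub c)) (hC.mono (hsub c)) (fun t ht => hApos t (hsub c ht)) hx₀
  choose z hzs hz hzneg using hexists
  have hcompat (c d : Ico s b) : EqOn (z c) (z d) (Icc s c ∩ Icc s d) := fun t ht =>
    have hcont := inter_subset_left.trans (hsub c)
    eqOn_of_isIntegralCurveOn_abelField (ordConnected_Icc.inter ordConnected_Icc)
      (hA.mono hcont) (hC.mono hcont)
      ((hz c).mono inter_subset_left) (fun r hr => hzneg c r hr.1)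
      ((hz d).mono inter_subset_right) (fun r hr => hzneg d r hr.2)
      ⟨left_mem_Icc.2 c.2.1, left_mem_Icc.2 d.2.1⟩ ((hzs c).trans (hzs d).symm) ⟨ht, ht.1.1⟩
  have hcover : ∀ t ∈ Ico s b, ∃ c : Ico s b, Icc s c.1 ∈ 𝓝[Ico s b] t := fun t ht => by
    obtain ⟨c, htc, hcb⟩ := exists_between ht.2
    refine ⟨⟨c, ht.1.trans htc.le, hcb⟩, ?_⟩
    filter_upwards [self_mem_nhdsWithin, mem_nhdsWithin_of_mem_nhds (Iic_mem_nhds htc)]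
      with r hr hrc using ⟨hr.1, hrc⟩
  obtain ⟨Z, hZ, hZz⟩ := exists_isIntegralCurveOn_of_cover hz hcompat hcover
  have hZeq (t : ℝ) (ht : t ∈ Ico s b) : Z t = z ⟨t, ht⟩ t := hZz ⟨t, ht⟩ (right_mem_Icc.2 ht.1)
  exact ⟨Z, (hZeq s (left_mem_Ico.2 hsb)).trans (hzs _), hZ,
    fun t ht => (hZeq t ht).trans_lt (hzneg _ t (right_mem_Icc.2 ht.1))⟩

lemma exists_neg_isIntegralCurveOn_abelField_extension {t₁ t₂ b : ℝ} (ht₁t₂ : t₁ < t₂)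
    (ht₂b : t₂ ≤ b) (hA : ContinuousOn A (Ioo t₁ b)) (hB : ContinuousOn B (Ioo t₁ b))
    (hC : ContinuousOn C (Ioo t₁ b)) (hApos : ∀ t ∈ Ioo t₁ b, 0 < A t) {x : ℝ → ℝ}
    (hx : IsIntegralCurveOn x (abelField A B C) (Ico t₁ t₂)) (hxneg : ∀ t ∈ Ico t₁ t₂, x t < 0) :
    ∃ y : ℝ → ℝ, IsIntegralCurveOn y (abelField A B C) (Ico t₁ b) ∧
      (∀ t ∈ Ico t₁ b, y t < 0) ∧ EqOn y x (Ico t₁ t₂) := by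
  obtain ⟨s, hs₁, hs₂⟩ := exists_between ht₁t₂
  have hsub : Ico s b ⊆ Ioo t₁ b := Ico_subset_Ioo_left hs₁
  obtain ⟨z, hzs, hz, hzneg⟩ := exists_neg_isIntegralCurveOn_abelField_Ico (hs₂.trans_le ht₂b)
    (hA.mono hsub) (hB.mono hsub) (hC.mono hsub) (fun t ht => hApos t (hsub ht))
    (hxneg s ⟨hs₁.le, hs₂⟩)
  have hxz : EqOn x z (Ico t₁ t₂ ∩ Ico s b) := fun t ht =>
    have hcont := inter_subset_right.trans hsub
    eqOn_of_isIntegralCurveOn_abelField (ordConnected_Ico.inter ordConnected_Ico)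
      (hA.mono hcont) (hC.mono hcont)
      (hx.mono inter_subset_left) (fun r hr => hxneg r hr.1)
      (hz.mono inter_subset_right) (fun r hr => hzneg r hr.2)
      ⟨⟨hs₁.le, hs₂⟩, le_rfl, hs₂.trans_le ht₂b⟩ hzs.symm ⟨ht, ht.2.1⟩
  let u : Bool → Set ℝ := fun i => cond i (Ico t₁ t₂) (Ico s b)
  have hcover : ∀ t ∈ Ico t₁ b, ∃ i, u i ∈ 𝓝[Ico t₁ b] t := fun t _ => by
    rcases lt_or_ge t t₂ with htt₂ | htt₂
    · refine ⟨true, ?_⟩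
      filter_upwards [self_mem_nhdsWithin, mem_nhdsWithin_of_mem_nhds (Iio_mem_nhds htt₂)]
        with r hr hrt₂ using ⟨hr.1, hrt₂⟩
    · refine ⟨false, ?_⟩
      filter_upwards [self_mem_nhdsWithin,
        mem_nhdsWithin_of_mem_nhds (Ici_mem_nhds (hs₂.trans_le htt₂))]
        with r hr hsr using ⟨hsr, hr.2⟩
  obtain ⟨y, hy, hyeq⟩ := exists_isIntegralCurveOn_of_cover (γ := fun i : Bool => cond i x z)
    (u := u) (Bool.forall_bool.2 ⟨hz, hx⟩) (by
      rintro (_ | _) (_ | _)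
      exacts [eqOn_refl _ _, inter_comm _ _ ▸ hxz.symm, hxz, eqOn_refl _ _]) hcover
  refine ⟨y, hy, fun t ht => ?_, hyeq true⟩
  rcases lt_or_ge t s with hts | hst
  · have htx : t ∈ Ico t₁ t₂ := ⟨ht.1, hts.trans hs₂⟩
    exact (hyeq true htx).trans_lt (hxneg t htx)
  · exact (hyeq false ⟨hst, ht.2⟩).trans_lt (hzneg t ⟨hst, ht.2⟩)

end AbelField

theorem negative_solution_extends_general {A B C : ℝ → ℝ} {t₁ t₂ b : ℝ} (ht₁t₂ : t₁ < t₂)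
    (ht₂b : t₂ ≤ b) (hA : ContinuousOn A (Ioo t₁ b)) (hB : ContinuousOn B (Ioo t₁ b))
    (hC : ContinuousOn C (Ioo t₁ b)) (hApos : ∀ t ∈ Ioo t₁ b, 0 < A t) {x x' : ℝ → ℝ}
    (hsol : ∀ t ∈ Ico t₁ t₂, HasDerivWithinAt x (x' t) (Ico t₁ t₂) t ∧
      x t * x' t = A t + B t * x t + C t * x t ^ 2)
    (hneg : ∀ t ∈ Ico t₁ t₂, x t < 0) :
    ∃ y y' : ℝ → ℝ,
      (∀ t ∈ Ico t₁ b, HasDerivWithinAt y (y' t) (Ico t₁ b) t ∧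
        y t * y' t = A t + B t * y t + C t * y t ^ 2) ∧
      (∀ t ∈ Ico t₁ b, y t < 0) ∧
      (∀ t ∈ Ico t₁ t₂, y t = x t) := by
  have hx : IsIntegralCurveOn x (abelField A B C) (Ico t₁ t₂) := fun t ht =>
    (hsol t ht).1.congr_deriv ((eq_abelField_iff (hneg t ht).ne).2 (hsol t ht).2)
  obtain ⟨y, hy, hyneg, hyx⟩ :=
    exists_neg_isIntegralCurveOn_abelField_extension ht₁t₂ ht₂b hA hB hC hApos hx hneg
  exact ⟨y, fun t => abelField A B C t (y t),
    fun t ht => ⟨hy t ht, (eq_abelField_iff (hyneg t ht).ne).1 rfl⟩, hyneg, hyx⟩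

/-- under (H) with B > 0, a negative solution of (N) on [t₁,t₂) ⊆ [a,b),
where a,b are consecutive zeros of A with A > 0 on (a,b), extends to a negative
solution on [t₁,b). -/
theorem negative_solution_extends
    (T : ℝ) (hT : 0 < T) (A B C : ℝ → ℝ)
    (hA : ContDiff ℝ 1 A) (hB : ContDiff ℝ 1 B) (hC : ContDiff ℝ 1 C)
    (hAper : Function.Periodic A T) (hBper : Function.Periodic B T)
    (hCper : Function.Periodic C T)
    (hzero : ∃ t ∈ Icc (0 : ℝ) T, A t = 0)
    (hcond : (sInf ((fun t => |B t|) '' Icc (0 : ℝ) T)) ^ 2 >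
      -4 * sInf ((fun t => deriv A t) '' Icc (0 : ℝ) T) *
        (1 + T * sSup ((fun t => |C t|) '' Icc (0 : ℝ) T)))
    (hBpos : ∀ t : ℝ, 0 < B t)
    (a b : ℝ) (hab : a < b) (hAa : A a = 0) (hAb : A b = 0)
    (hApos : ∀ t ∈ Ioo a b, 0 < A t)
    (t₁ t₂ : ℝ) (hat₁ : a ≤ t₁) (ht₁t₂ : t₁ < t₂) (ht₂b : t₂ ≤ b)
    (x x' : ℝ → ℝ)
    (hsol : ∀ t ∈ Ico t₁ t₂, HasDerivWithinAt x (x' t) (Ico t₁ t₂) t ∧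
      x t * x' t = A t + B t * x t + C t * x t ^ 2)
    (hneg : ∀ t ∈ Ico t₁ t₂, x t < 0) :
    ∃ y y' : ℝ → ℝ,
      (∀ t ∈ Ico t₁ b, HasDerivWithinAt y (y' t) (Ico t₁ b) t ∧
        y t * y' t = A t + B t * y t + C t * y t ^ 2) ∧
      (∀ t ∈ Ico t₁ b, y t < 0) ∧
      (∀ t ∈ Ico t₁ t₂, y t = x t) := by
  have hsub : Ioo t₁ b ⊆ Ioo a b := Ioo_subset_Ioo_left hat₁
  exact negative_solution_extends_general ht₁t₂ ht₂b hA.continuous.continuousOn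
    hB.continuous.continuousOn hC.continuous.continuousOn (fun t ht => hApos t (hsub ht)) hsol hneg
end

section
/- Assume (H) and that B(t) > 0 for all t. Let a < b be real numbers with A(a) = A(b) = 0 and A(t) > 0 for all t ∈ (a, b). Then there exists a C¹ solution x* of (N) on (a, b) such that x*(t) < 0 for all t ∈ (a, b), lim_{t→a⁺} x*(t) = 0, and lim_{t→a⁺} x*′(t) = B(a)/2 − √(B(a)²/4 + A′(a)). -/
open Set Filter Topology

/-!
Writing `y = -x > 0` turns the equation into `y' = A / y - B + C * y`, singular at `t = a`, where
both `A` and `y` vanish. With `A` replaced by `A + ε` the singularity disappears: for small `c` the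
function `c * (A + ε)` is a strict lower solution on all of `[a, b]` and a steep exponential is a
strict upper one, so there is a solution `y_ε` on `[a, b]` with `y_ε a = c * ε`. The slopes of the
`y_ε` are bounded uniformly in `ε`, since `(A + ε) / y_ε ≤ 1 / c`, and `y_ε` decreases as `ε`
decreases. Hence `y_ε` converges pointwise to a Lipschitz function `y ≥ c * A` with `y a = 0`, and
dominated convergence in the integral equation shows that `y` is a solution.

The slope at `a` is the same for every positive solution tending to `0`. Let `K` be the larger root
of `K * (K - B a) = A' a`. Near `a`, a solution grows faster than `A / q` as long as it is below
`A / q` when `q > K`, and more slowly as long as it is above `A / q` when `q < K`. Since the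
difference vanishes at `a`, no solution can be on the wrong side. Therefore `A / y → K` and
`y' → K - B a`.
-/

lemma le_of_deriv_lt_of_eq {f f' g g' : ℝ → ℝ} {a b : ℝ}
    (hf : ∀ t ∈ Icc a b, HasDerivWithinAt f (f' t) (Icc a b) t)
    (hg : ∀ t ∈ Icc a b, HasDerivWithinAt g (g' t) (Icc a b) t)
    (hfg : ∀ t ∈ Icc a b, f t = g t → f' t < g' t) (ha : f a ≤ g a) :
    ∀ t ∈ Icc a b, f t ≤ g t := by
  have right_deriv {h h' : ℝ → ℝ} (hh : ∀ t ∈ Icc a b, HasDerivWithinAt h (h' t) (Icc a b) t)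
      (t : ℝ) (ht : t ∈ Ico a b) : HasDerivWithinAt h (h' t) (Ici t) t :=
    (hh t (Ico_subset_Icc_self ht)).mono_of_mem_nhdsWithin
      (mem_of_superset (Icc_mem_nhdsGE ht.2) (Icc_subset_Icc_left ht.1))
  exact fun t ht => image_le_of_deriv_right_lt_deriv_boundary'
    (fun t ht => (hf t ht).continuousWithinAt) (right_deriv hf) ha
    (fun t ht => (hg t ht).continuousWithinAt) (right_deriv hg)
    (fun t ht => hfg t (Ico_subset_Icc_self ht)) ht

lemma eventually_nonneg_of_tendsto_zero_of_deriv_pos {g g' : ℝ → ℝ} {a : ℝ}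
    (hg : ∀ᶠ t in 𝓝[>] a, HasDerivAt g (g' t) t) (hlim : Tendsto g (𝓝[>] a) (𝓝 0))
    (hpos : ∀ᶠ t in 𝓝[>] a, g t < 0 → 0 < g' t) : ∀ᶠ t in 𝓝[>] a, 0 ≤ g t := by
  obtain ⟨b, hab, hb⟩ := mem_nhdsGT_iff_exists_Ioo_subset.1 (hg.and hpos)
  filter_upwards [Ioo_mem_nhdsGT hab] with t ht
  refine le_of_forall_lt_imp_le_of_dense fun c hc => ?_
  obtain ⟨s, hcs, has, hst⟩ :=
    ((hlim.eventually (lt_mem_nhds hc)).and (Ioo_mem_nhdsGT ht.1)).exists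
  have hsub : Icc s t ⊆ Ioo a b := Icc_subset_Ioo has ht.2
  exact le_of_deriv_lt_of_eq (fun r _ => hasDerivWithinAt_const r _ c)
    (fun r hr => (hb (hsub hr)).1.hasDerivWithinAt)
    (fun r hr hcr => (hb (hsub hr)).2 (hcr ▸ hc)) hcs.le t ⟨hst.le, le_rfl⟩

lemma deriv_nonneg_of_eventually_pos {f : ℝ → ℝ} {a : ℝ} (hf : DifferentiableAt ℝ f a)
    (hfa : f a = 0) (hpos : ∀ᶠ t in 𝓝[>] a, 0 < f t) : 0 ≤ deriv f a := by
  have hslope := (hasDerivWithinAt_iff_tendsto_slope' self_notMem_Ioi).1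
    hf.hasDerivAt.hasDerivWithinAt
  refine ge_of_tendsto hslope ?_
  filter_upwards [hpos, self_mem_nhdsWithin] with t ht hat
  rw [slope_def_field, hfa, sub_zero]
  exact (div_pos ht (sub_pos.2 hat)).le

lemma nonneg_Icc_of_pos_Ioo {f : ℝ → ℝ} {a b : ℝ} (hab : a ≠ b) (hf : ContinuousOn f (Icc a b))
    (hpos : ∀ t ∈ Ioo a b, 0 < f t) : ∀ t ∈ Icc a b, 0 ≤ f t := by
  rw [← closure_Ioo hab] at hf ⊢
  exact fun t ht => le_on_closure (fun t ht => (hpos t ht).le) continuousOn_const hf ht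

lemma lipschitzOnWith_of_tendsto {ι α β : Type*} [PseudoMetricSpace α] [PseudoMetricSpace β]
    {l : Filter ι} [l.NeBot] {u : ι → α → β} {U : α → β} {K : NNReal} {s : Set α}
    (hu : ∀ i, LipschitzOnWith K (u i) s) (hlim : ∀ x ∈ s, Tendsto (u · x) l (𝓝 (U x))) :
    LipschitzOnWith K U s :=
  LipschitzOnWith.of_dist_le_mul fun x hx y hy =>
    le_of_tendsto ((hlim x hx).dist (hlim y hy))
      (Eventually.of_forall fun i => (hu i).dist_le_mul x hx y hy)

lemma hasDerivAt_of_tendsto_of_norm_deriv_le {ι E : Type*} [NormedAddCommGroup E]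
    [NormedSpace ℝ E] [CompleteSpace E] {l : Filter ι} [l.NeBot] [l.IsCountablyGenerated]
    {u u' : ι → ℝ → E} {U U' : ℝ → E} {L : ℝ} {s : Set ℝ} (hs : IsOpen s) [s.OrdConnected]
    (hu : ∀ i, ∀ t ∈ s, HasDerivAt (u i) (u' i t) t) (hu' : ∀ i, ContinuousOn (u' i) s)
    (hL : ∀ i, ∀ t ∈ s, ‖u' i t‖ ≤ L) (hlim : ∀ t ∈ s, Tendsto (u · t) l (𝓝 (U t)))
    (hlim' : ∀ t ∈ s, Tendsto (u' · t) l (𝓝 (U' t))) (hU' : ContinuousOn U' s) :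
    ∀ t ∈ s, HasDerivAt U (U' t) t := by
  intro t ht
  have hsub {r : ℝ} (hr : r ∈ s) : uIcc t r ⊆ s := OrdConnected.uIcc_subset ‹_› ht hr
  have integral_eq (r : ℝ) (hr : r ∈ s) : U r = U t + ∫ x in t..r, U' x := by
    have h_int : Tendsto (fun i => ∫ x in t..r, u' i x) l (𝓝 (∫ x in t..r, U' x)) :=
      intervalIntegral.tendsto_integral_filter_of_dominated_convergence (fun _ => L)
        (Eventually.of_forall fun i => (((hu' i).mono (hsub hr)).mono
          uIoc_subset_uIcc).aestronglyMeasurable measurableSet_uIoc)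
        (Eventually.of_forall fun i => Eventually.of_forall fun x hx =>
          hL i x (hsub hr (uIoc_subset_uIcc hx)))
        intervalIntegrable_const
        (Eventually.of_forall fun x hx => hlim' x (hsub hr (uIoc_subset_uIcc hx)))
    have h_ftc (i : ι) : ∫ x in t..r, u' i x = u i r - u i t :=
      intervalIntegral.integral_eq_sub_of_hasDerivAt (fun x hx => hu i x (hsub hr hx))
        ((hu' i).mono (hsub hr)).intervalIntegrable
    simp only [h_ftc] at h_int
    rw [tendsto_nhds_unique h_int ((hlim r hr).sub (hlim t ht)), add_sub_cancel]
  have h_deriv : HasDerivAt (fun r => ∫ x in t..r, U' x) (U' t) t :=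
    intervalIntegral.integral_hasDerivAt_right (by simp)
      (hU'.stronglyMeasurableAtFilter hs t ht) (hU'.continuousAt (hs.mem_nhds ht))
  exact (h_deriv.const_add (U t)).congr_of_eventuallyEq
    (eventually_of_mem (hs.mem_nhds ht) integral_eq)

/- The field is frozen outside the strip between the barriers, which makes it globally bounded and
Lipschitz; the solution never leaves the strip, so it does not see the modification. -/
lemma exists_isIntegralCurveOn_between {f : ℝ → ℝ → ℝ} {l l' u u' : ℝ → ℝ} {a b L y₀ : ℝ}
    {K : NNReal} (hab : a ≤ b)
    (hf : ContinuousOn (Function.uncurry f) {p | p.1 ∈ Icc a b ∧ p.2 ∈ Icc (l p.1) (u p.1)})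
    (hlip : ∀ t ∈ Icc a b, LipschitzOnWith K (f t) (Icc (l t) (u t)))
    (hL : ∀ t ∈ Icc a b, ∀ y ∈ Icc (l t) (u t), |f t y| ≤ L)
    (hl : ∀ t ∈ Icc a b, HasDerivWithinAt l (l' t) (Icc a b) t)
    (hu : ∀ t ∈ Icc a b, HasDerivWithinAt u (u' t) (Icc a b) t)
    (hl' : ∀ t ∈ Icc a b, l' t < f t (l t)) (hu' : ∀ t ∈ Icc a b, f t (u t) < u' t)
    (hy₀ : y₀ ∈ Icc (l a) (u a)) :
    ∃ y : ℝ → ℝ, y a = y₀ ∧ (∀ t ∈ Icc a b, y t ∈ Icc (l t) (u t)) ∧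
      IsIntegralCurveOn y f (Icc a b) := by
  have hlu : ∀ t ∈ Icc a b, l t ≤ u t := le_of_deriv_lt_of_eq hl hu
    (fun t ht h => (hl' t ht).trans (h ▸ hu' t ht)) (hy₀.1.trans hy₀.2)
  set clamp : ℝ → ℝ → ℝ := fun t y => max (l t) (min (u t) y)
  have clamp_mem (t : ℝ) (ht : t ∈ Icc a b) (y : ℝ) : clamp t y ∈ Icc (l t) (u t) :=
    ⟨le_max_left _ _, max_le (hlu t ht) (min_le_left _ _)⟩
  have clamp_eq {t y : ℝ} (hy : y ∈ Icc (l t) (u t)) : clamp t y = y := by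
    simp only [clamp, min_eq_right hy.2, max_eq_right hy.1]
  have hL₀ : 0 ≤ L := (abs_nonneg _).trans
    (hL a (left_mem_Icc.2 hab) _ (clamp_mem a (left_mem_Icc.2 hab) y₀))
  have hPL : IsPicardLindelof (fun t y => f t (clamp t y)) (⟨a, left_mem_Icc.2 hab⟩ : Icc a b) y₀
      (L * (b - a)).toNNReal 0 L.toNNReal K := by
    refine ⟨fun t ht => ?_, fun y _ => ?_, fun t ht y _ => ?_, ?_⟩
    · have hclamp : LipschitzWith 1 (clamp t) := (LipschitzWith.id.const_min (u t)).const_max (l t)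
      simpa only [mul_one, Function.comp_def] using
        (hlip t ht).comp hclamp.lipschitzOnWith fun y _ => clamp_mem t ht y
    · have hlc : ContinuousOn l (Icc a b) := fun t ht => (hl t ht).continuousWithinAt
      have huc : ContinuousOn u (Icc a b) := fun t ht => (hu t ht).continuousWithinAt
      exact hf.comp (continuousOn_id.prodMk (hlc.sup (huc.inf continuousOn_const)))
        fun t ht => ⟨ht, clamp_mem t ht y⟩
    · simpa only [Real.coe_toNNReal _ hL₀, Real.norm_eq_abs] using hL t ht _ (clamp_mem t ht y)
    · have hba : 0 ≤ b - a := sub_nonneg.2 hab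
      simp [Real.coe_toNNReal _ hL₀, Real.coe_toNNReal _ (mul_nonneg hL₀ hba), hba]
  obtain ⟨y, rfl, hy⟩ := hPL.exists_eq_forall_mem_Icc_hasDerivWithinAt₀
  have hly : ∀ t ∈ Icc a b, l t ≤ y t := le_of_deriv_lt_of_eq hl hy
    (fun t ht h => by rw [← h, clamp_eq ⟨le_rfl, hlu t ht⟩]; exact hl' t ht) hy₀.1
  have hyu : ∀ t ∈ Icc a b, y t ≤ u t := le_of_deriv_lt_of_eq hy hu
    (fun t ht h => by rw [h, clamp_eq ⟨hlu t ht, le_rfl⟩]; exact hu' t ht) hy₀.2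
  refine ⟨y, rfl, fun t ht => ⟨hly t ht, hyu t ht⟩, fun t ht => ?_⟩
  simpa only [clamp_eq ⟨hly t ht, hyu t ht⟩] using hy t ht

/-- The time-dependent vector field of the equation `y' = A / y - B + C * y`, which `y = -x`
satisfies when `x` is a nowhere vanishing solution of `x * x' = A + B * x + C * x ^ 2`. It is
meaningful for `y ≠ 0` only. -/
noncomputable def negAbelField (A B C : ℝ → ℝ) (t y : ℝ) : ℝ := A t / y - B t + C t * y

section Field

variable {A B C : ℝ → ℝ} {S t : ℝ}

lemma neg_mul_neg_negAbelField {y : ℝ} (hy : y ≠ 0) :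
    -y * -negAbelField A B C t y = A t + B t * -y + C t * (-y) ^ 2 := by
  unfold negAbelField
  field_simp
  ring

lemma continuousOn_uncurry_negAbelField {s : Set ℝ} (hA : ContinuousOn A s)
    (hB : ContinuousOn B s) (hC : ContinuousOn C s) :
    ContinuousOn (Function.uncurry (negAbelField A B C)) (s ×ˢ {0}ᶜ) := by
  have hfst : MapsTo Prod.fst (s ×ˢ ({0}ᶜ : Set ℝ)) s := fun p hp => hp.1
  exact (((hA.comp continuousOn_fst hfst).div continuousOn_snd fun p hp => hp.2).sub
    (hB.comp continuousOn_fst hfst)).add ((hC.comp continuousOn_fst hfst).mul continuousOn_snd)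

lemma continuousOn_negAbelField_comp {s : Set ℝ} {y : ℝ → ℝ} (hA : ContinuousOn A s)
    (hB : ContinuousOn B s) (hC : ContinuousOn C s) (hy : ContinuousOn y s)
    (hy₀ : ∀ t ∈ s, y t ≠ 0) : ContinuousOn (fun t => negAbelField A B C t (y t)) s :=
  (continuousOn_uncurry_negAbelField hA hB hC).comp (continuousOn_id.prodMk hy)
    fun t ht => ⟨ht, hy₀ t ht⟩

lemma lipschitzOnWith_negAbelField {m : ℝ} (hm : 0 < m) (hA : |A t| ≤ S) (hC : |C t| ≤ S) :
    LipschitzOnWith (S / m ^ 2 + S).toNNReal (negAbelField A B C t) (Ici m) := by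
  refine LipschitzOnWith.of_dist_le' fun x (hx : m ≤ x) y (hy : m ≤ y) => ?_
  have hx₀ : 0 < x := hm.trans_le hx
  have hy₀ : 0 < y := hm.trans_le hy
  have hS : 0 ≤ S := (abs_nonneg _).trans hA
  have hxy : m ^ 2 ≤ x * y := by rw [sq]; gcongr
  have hdiff : negAbelField A B C t x - negAbelField A B C t y =
      (-(A t / (x * y)) + C t) * (x - y) := by
    unfold negAbelField
    field_simp
    ring
  rw [Real.dist_eq, Real.dist_eq, hdiff, abs_mul]
  gcongr
  calc |-(A t / (x * y)) + C t| ≤ |A t| / (x * y) + |C t| := by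
        simpa only [abs_neg, abs_div, abs_of_pos (mul_pos hx₀ hy₀)] using
          abs_add_le (-(A t / (x * y))) (C t)
    _ ≤ S / m ^ 2 + S := by gcongr

lemma abs_negAbelField_le {c U y : ℝ} (hc : 0 < c) (hA₀ : 0 < A t) (hB : |B t| ≤ S)
    (hC : |C t| ≤ S) (hy : y ∈ Icc (c * A t) U) : |negAbelField A B C t y| ≤ 1 / c + S + S * U := by
  have hy₀ : 0 < y := (mul_pos hc hA₀).trans_le hy.1
  have hS : 0 ≤ S := (abs_nonneg _).trans hB
  have hAy : |A t / y| ≤ 1 / c := by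
    rw [abs_of_pos (div_pos hA₀ hy₀), div_le_div_iff₀ hy₀ hc]
    linarith [hy.1]
  have hCy : |C t * y| ≤ S * U := by
    rw [abs_mul, abs_of_pos hy₀]
    exact mul_le_mul hC hy.2 hy₀.le hS
  calc |negAbelField A B C t y| ≤ |A t / y - B t| + |C t * y| := abs_add_le _ _
    _ ≤ |A t / y| + |B t| + |C t * y| := by gcongr; exact abs_sub _ _
    _ ≤ 1 / c + S + S * U := by gcongr

lemma mul_lt_negAbelField_mul {d : ℝ} (hA₀ : 0 < A t) (hA : A t ≤ S) (hd : |d| ≤ S)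
    (hB : |B t| ≤ S) (hC : |C t| ≤ S) :
    1 / (S + 1) ^ 2 * d < negAbelField A B C t (1 / (S + 1) ^ 2 * A t) := by
  have hS : 0 < S := hA₀.trans_le hA
  set c := 1 / (S + 1) ^ 2 with hc
  have hc₀ : 0 < c := by positivity
  have hcS : c * (S + 1) ^ 2 = 1 := by rw [hc]; field_simp
  have hdiv : A t / (c * A t) = (S + 1) ^ 2 := by rw [hc]; field_simp
  have hcd : c * d ≤ c * S := by gcongr; exact (le_abs_self d).trans hd
  have hCA : -(c * S ^ 2) ≤ C t * (c * A t) := by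
    have : |C t * (c * A t)| ≤ S * (c * S) := by
      rw [abs_mul, abs_of_pos (mul_pos hc₀ hA₀)]
      gcongr
    linarith [(abs_le.1 this).1]
  unfold negAbelField
  rw [hdiv]
  nlinarith [(abs_le.1 hB).2]

lemma negAbelField_lt_mul {u : ℝ} (hu : 1 ≤ u) (hA : |A t| ≤ S) (hB : |B t| ≤ S)
    (hC : |C t| ≤ S) : negAbelField A B C t u < (3 * S + 1) * u := by
  have hS : 0 ≤ S := (abs_nonneg _).trans hA
  have hAu : A t / u ≤ S * u := by
    rw [div_le_iff₀ (by positivity)]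
    calc A t ≤ S := (le_abs_self _).trans hA
      _ ≤ S * u := le_mul_of_one_le_right hS hu
      _ ≤ S * u * u := le_mul_of_one_le_right (by positivity) hu
  have hCu : C t * u ≤ S * u := by gcongr; exact (le_abs_self _).trans hC
  unfold negAbelField
  nlinarith [(abs_le.1 hB).1]

end Field

section Existence

variable {A A' B C : ℝ → ℝ} {a b S : ℝ}

lemma exists_isIntegralCurveOn_negAbelField_of_pos (hab : a ≤ b)
    (hA : ∀ t ∈ Icc a b, HasDerivWithinAt A (A' t) (Icc a b) t)
    (hB : ContinuousOn B (Icc a b)) (hC : ContinuousOn C (Icc a b))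
    (hA₀ : ∀ t ∈ Icc a b, 0 < A t) (hAS : ∀ t ∈ Icc a b, A t ≤ S)
    (hA'S : ∀ t ∈ Icc a b, |A' t| ≤ S) (hBS : ∀ t ∈ Icc a b, |B t| ≤ S)
    (hCS : ∀ t ∈ Icc a b, |C t| ≤ S) :
    ∃ y : ℝ → ℝ, y a = 1 / (S + 1) ^ 2 * A a ∧
      (∀ t ∈ Icc a b, y t ∈ Icc (1 / (S + 1) ^ 2 * A t) (Real.exp ((3 * S + 1) * (b - a)))) ∧
      IsIntegralCurveOn y (negAbelField A B C) (Icc a b) := by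
  have hS : 0 < S := (hA₀ a (left_mem_Icc.2 hab)).trans_le (hAS a (left_mem_Icc.2 hab))
  have hAS' (t : ℝ) (ht : t ∈ Icc a b) : |A t| ≤ S := by
    simpa only [abs_of_pos (hA₀ t ht)] using hAS t ht
  set c := 1 / (S + 1) ^ 2 with hc
  have hc₀ : 0 < c := by positivity
  set u : ℝ → ℝ := fun t => Real.exp ((3 * S + 1) * (t - a))
  have hu_one (t : ℝ) (ht : t ∈ Icc a b) : 1 ≤ u t :=
    Real.one_le_exp (mul_nonneg (by positivity) (sub_nonneg.2 ht.1))
  have hu_le (t : ℝ) (ht : t ∈ Icc a b) : u t ≤ u b :=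
    Real.exp_le_exp.2 (by gcongr; exact ht.2)
  have hu_deriv (t : ℝ) : HasDerivAt u ((3 * S + 1) * u t) t := by
    have h := (((hasDerivAt_id t).sub_const a).const_mul (3 * S + 1)).exp
    simpa only [mul_one, id, mul_comm (Real.exp _)] using h
  have hlu : c * A a ≤ u a := by
    refine le_trans ?_ (hu_one a (left_mem_Icc.2 hab))
    rw [hc, one_div, inv_mul_eq_div, div_le_one (by positivity)]
    nlinarith [hAS a (left_mem_Icc.2 hab)]
  have hA_cont : ContinuousOn A (Icc a b) := fun t ht => (hA t ht).continuousWithinAt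
  obtain ⟨t₀, ht₀, hmin⟩ := isCompact_Icc.exists_isMinOn (nonempty_Icc.2 hab) hA_cont
  have hm : 0 < c * A t₀ := mul_pos hc₀ (hA₀ t₀ ht₀)
  obtain ⟨y, hya, hyu, hy⟩ := exists_isIntegralCurveOn_between hab
    ((continuousOn_uncurry_negAbelField hA_cont hB hC).mono fun p hp =>
      ⟨hp.1, ((mul_pos hc₀ (hA₀ _ hp.1)).trans_le hp.2.1).ne'⟩)
    (fun t ht => (lipschitzOnWith_negAbelField hm (hAS' t ht) (hCS t ht)).mono fun y hy =>
      (mul_le_mul_of_nonneg_left (hmin ht) hc₀.le).trans hy.1)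
    (fun t ht y hy => abs_negAbelField_le hc₀ (hA₀ t ht) (hBS t ht) (hCS t ht)
      ⟨hy.1, hy.2.trans (hu_le t ht)⟩)
    (fun t ht => (hA t ht).const_mul c) (fun t _ => (hu_deriv t).hasDerivWithinAt)
    (fun t ht => mul_lt_negAbelField_mul (hA₀ t ht) (hAS t ht) (hA'S t ht) (hBS t ht) (hCS t ht))
    (fun t ht => negAbelField_lt_mul (hu_one t ht) (hAS' t ht) (hBS t ht) (hCS t ht))
    (left_mem_Icc.2 hlu)
  exact ⟨y, hya, fun t ht => ⟨(hyu t ht).1, (hyu t ht).2.trans (hu_le t ht)⟩, hy⟩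

lemma le_of_isIntegralCurveOn_negAbelField {A₁ A₂ v w : ℝ → ℝ}
    (hv : IsIntegralCurveOn v (negAbelField A₁ B C) (Icc a b))
    (hw : IsIntegralCurveOn w (negAbelField A₂ B C) (Icc a b))
    (hv₀ : ∀ t ∈ Icc a b, 0 < v t) (hA : ∀ t ∈ Icc a b, A₁ t < A₂ t) (ha : v a ≤ w a) :
    ∀ t ∈ Icc a b, v t ≤ w t := by
  refine le_of_deriv_lt_of_eq hv hw (fun t ht h => ?_) ha
  have hvt := hv₀ t ht
  have hAt := hA t ht
  unfold negAbelField
  rw [← h]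
  gcongr

lemma exists_forall_abs_le_Icc (hA : ContinuousOn A (Icc a b)) (hA' : ContinuousOn A' (Icc a b))
    (hB : ContinuousOn B (Icc a b)) (hC : ContinuousOn C (Icc a b)) :
    ∃ S, ∀ t ∈ Icc a b, |A t| ≤ S ∧ |A' t| ≤ S ∧ |B t| ≤ S ∧ |C t| ≤ S := by
  obtain ⟨S, hS⟩ := isCompact_Icc.exists_bound_of_continuousOn
    (hA.prodMk (hA'.prodMk (hB.prodMk hC)))
  exact ⟨S, fun t ht => by simpa only [norm_prod_le_iff, Real.norm_eq_abs] using hS t ht⟩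

lemma exists_isIntegralCurveOn_negAbelField_add (hab : a ≤ b)
    (hA : ∀ t ∈ Icc a b, HasDerivWithinAt A (A' t) (Icc a b) t)
    (hA' : ContinuousOn A' (Icc a b)) (hB : ContinuousOn B (Icc a b))
    (hC : ContinuousOn C (Icc a b)) (hA₀ : ∀ t ∈ Icc a b, 0 ≤ A t) :
    ∃ c > 0, ∃ L, ∃ y : ℝ → ℝ → ℝ, (∀ ε ∈ Ioc (0 : ℝ) 1, y ε a = c * (A a + ε) ∧
      (∀ t ∈ Icc a b, c * (A t + ε) ≤ y ε t) ∧
      (∀ t ∈ Icc a b, |negAbelField (A · + ε) B C t (y ε t)| ≤ L) ∧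
      IsIntegralCurveOn (y ε) (negAbelField (A · + ε) B C) (Icc a b)) ∧
      ∀ t ∈ Icc a b, MonotoneOn (y · t) (Ioc 0 1) := by
  obtain ⟨S, hS⟩ := exists_forall_abs_le_Icc (fun t ht => (hA t ht).continuousWithinAt) hA' hB hC
  have hS₀ : 0 ≤ S := (abs_nonneg _).trans (hS a (left_mem_Icc.2 hab)).1
  have hA_add_pos (ε : ℝ) (hε : ε ∈ Ioc (0 : ℝ) 1) (t : ℝ) (ht : t ∈ Icc a b) : 0 < A t + ε :=
    add_pos_of_nonneg_of_pos (hA₀ t ht) hε.1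
  have key (ε : ℝ) (hε : ε ∈ Ioc (0 : ℝ) 1) :=
    exists_isIntegralCurveOn_negAbelField_of_pos (A := (A · + ε)) (S := S + 1) hab
      (fun t ht => (hA t ht).add_const ε) hB hC
      (hA_add_pos ε hε)
      (fun t ht => add_le_add ((le_abs_self _).trans (hS t ht).1) hε.2)
      (fun t ht => by linarith [hS t ht]) (fun t ht => by linarith [hS t ht])
      (fun t ht => by linarith [hS t ht])
  choose! y hya hyu hy using key
  have hc : 0 < 1 / (S + 1 + 1) ^ 2 := by positivity
  refine ⟨_, hc, _, y, fun ε hε => ⟨hya ε hε, fun t ht => (hyu ε hε t ht).1, fun t ht =>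
    abs_negAbelField_le (S := S + 1) hc (hA_add_pos ε hε t ht) (by linarith [hS t ht])
      (by linarith [hS t ht]) (hyu ε hε t ht), hy ε hε⟩, fun t ht δ hδ ε hε hδε => ?_⟩
  rcases hδε.eq_or_lt with rfl | hlt
  · exact le_rfl
  refine le_of_isIntegralCurveOn_negAbelField (hy δ hδ) (hy ε hε)
    (fun t ht => (mul_pos hc (hA_add_pos δ hδ t ht)).trans_le (hyu δ hδ t ht).1)
    (fun t _ => by gcongr) ?_ t ht
  rw [hya δ hδ, hya ε hε]
  gcongr


lemma isIntegralCurveOn_negAbelField_of_tendsto {ι : Type*} {l : Filter ι} [l.NeBot]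
    [l.IsCountablyGenerated] {α y : ι → ℝ → ℝ} {Y : ℝ → ℝ} {L : ℝ} {s : Set ℝ} (hs : IsOpen s)
    [s.OrdConnected] (hα : ∀ i, ContinuousOn (α i) s) (hA : ContinuousOn A s)
    (hB : ContinuousOn B s) (hC : ContinuousOn C s)
    (hy : ∀ i, IsIntegralCurveOn (y i) (negAbelField (α i) B C) s)
    (hy₀ : ∀ i, ∀ t ∈ s, y i t ≠ 0) (hL : ∀ i, ∀ t ∈ s, |negAbelField (α i) B C t (y i t)| ≤ L)
    (hαA : ∀ t ∈ s, Tendsto (α · t) l (𝓝 (A t))) (hyY : ∀ t ∈ s, Tendsto (y · t) l (𝓝 (Y t)))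
    (hY : ContinuousOn Y s) (hY₀ : ∀ t ∈ s, Y t ≠ 0) :
    IsIntegralCurveOn Y (negAbelField A B C) s := fun t ht =>
  (hasDerivAt_of_tendsto_of_norm_deriv_le (U' := fun t => negAbelField A B C t (Y t)) hs
    (fun i t ht => (hy i t ht).hasDerivAt (hs.mem_nhds ht))
    (fun i => continuousOn_negAbelField_comp (hα i) hB hC (hy i).continuousOn (hy₀ i)) hL hyY
    (fun t ht => (((hαA t ht).div (hyY t ht) (hY₀ t ht)).sub_const _).add
      ((hyY t ht).const_mul _))
    (continuousOn_negAbelField_comp hA hB hC hY hY₀) t ht).hasDerivWithinAt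

lemma exists_isIntegralCurveOn_negAbelField_ge_mul (hab : a < b)
    (hA : ∀ t ∈ Icc a b, HasDerivWithinAt A (A' t) (Icc a b) t)
    (hA' : ContinuousOn A' (Icc a b)) (hB : ContinuousOn B (Icc a b))
    (hC : ContinuousOn C (Icc a b)) (hA₀ : ∀ t ∈ Ioo a b, 0 < A t) :
    ∃ c > 0, ∃ y : ℝ → ℝ, y a = c * A a ∧ ContinuousOn y (Icc a b) ∧
      (∀ t ∈ Icc a b, c * A t ≤ y t) ∧ IsIntegralCurveOn y (negAbelField A B C) (Ioo a b) := by
  have hA_cont : ContinuousOn A (Icc a b) := fun t ht => (hA t ht).continuousWithinAt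
  have hA_nonneg := nonneg_Icc_of_pos_Ioo hab.ne hA_cont hA₀
  obtain ⟨c, hc, L, y, hy, hy_mono⟩ :=
    exists_isIntegralCurveOn_negAbelField_add hab.le hA hA' hB hC hA_nonneg
  set ε : ℕ → ℝ := fun n => 1 / (n + 1)
  have hε (n : ℕ) : ε n ∈ Ioc (0 : ℝ) 1 :=
    ⟨Nat.one_div_pos_of_nat, div_le_one_of_le₀ (by simp) (by positivity)⟩
  choose hya hcy hyL hy_curve using fun n => hy (ε n) (hε n)
  have hy_pos (n : ℕ) (t : ℝ) (ht : t ∈ Icc a b) : 0 < y (ε n) t :=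
    (mul_pos hc (add_pos_of_nonneg_of_pos (hA_nonneg t ht) (hε n).1)).trans_le (hcy n t ht)
  set Y : ℝ → ℝ := fun t => ⨅ n, y (ε n) t
  have hY_lim (t : ℝ) (ht : t ∈ Icc a b) : Tendsto (fun n => y (ε n) t) atTop (𝓝 (Y t)) :=
    tendsto_atTop_ciInf (fun m n hmn => hy_mono t ht (hε n) (hε m) (Nat.one_div_le_one_div hmn))
      ⟨0, forall_mem_range.2 fun n => (hy_pos n t ht).le⟩
  have hAε_lim (t : ℝ) : Tendsto (fun n => A t + ε n) atTop (𝓝 (A t)) := by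
    simpa only [add_zero] using tendsto_one_div_add_atTop_nhds_zero_nat.const_add (A t)
  have hcY (t : ℝ) (ht : t ∈ Icc a b) : c * A t ≤ Y t :=
    le_of_tendsto_of_tendsto' ((hAε_lim t).const_mul c) (hY_lim t ht) fun n => hcy n t ht
  have hYa : Y a = c * A a := tendsto_nhds_unique (hY_lim a (left_mem_Icc.2 hab.le))
    (by simpa only [hya] using (hAε_lim a).const_mul c)
  have hY_cont : ContinuousOn Y (Icc a b) := (lipschitzOnWith_of_tendsto
    (fun n => (convex_Icc a b).lipschitzOnWith_of_nnnorm_hasDerivWithin_le (C := L.toNNReal)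
      (hy_curve n) fun t ht => NNReal.coe_le_coe.1 ((hyL n t ht).trans (Real.le_coe_toNNReal L)))
    hY_lim).continuousOn
  have hsub : Ioo a b ⊆ Icc a b := Ioo_subset_Icc_self
  exact ⟨c, hc, Y, hYa, hY_cont, hcY, isIntegralCurveOn_negAbelField_of_tendsto isOpen_Ioo
    (fun n => (hA_cont.mono hsub).add continuousOn_const) (hA_cont.mono hsub) (hB.mono hsub)
    (hC.mono hsub) (fun n => (hy_curve n).mono hsub) (fun n t ht => (hy_pos n t (hsub ht)).ne')
    (fun n t ht => hyL n t (hsub ht)) (fun t _ => hAε_lim t) (fun t ht => hY_lim t (hsub ht))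
    (hY_cont.mono hsub) fun t ht => ((mul_pos hc (hA₀ t ht)).trans_le (hcY t (hsub ht))).ne'⟩

lemma exists_pos_isIntegralCurveOn_negAbelField (hab : a < b)
    (hA : ∀ t ∈ Icc a b, HasDerivWithinAt A (A' t) (Icc a b) t)
    (hA' : ContinuousOn A' (Icc a b)) (hB : ContinuousOn B (Icc a b))
    (hC : ContinuousOn C (Icc a b)) (hAa : A a = 0) (hA₀ : ∀ t ∈ Ioo a b, 0 < A t) :
    ∃ y : ℝ → ℝ, (∀ t ∈ Ioo a b, 0 < y t) ∧
      IsIntegralCurveOn y (negAbelField A B C) (Ioo a b) ∧ Tendsto y (𝓝[>] a) (𝓝 0) := by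
  obtain ⟨c, hc, y, hya, hy_cont, hcy, hy⟩ :=
    exists_isIntegralCurveOn_negAbelField_ge_mul hab hA hA' hB hC hA₀
  refine ⟨y, fun t ht => (mul_pos hc (hA₀ t ht)).trans_le (hcy t (Ioo_subset_Icc_self ht)), hy, ?_⟩
  have hya₀ : y a = 0 := by rw [hya, hAa, mul_zero]
  rw [← hya₀, ← nhdsWithin_Ioo_eq_nhdsGT hab]
  exact (hy_cont a (left_mem_Icc.2 hab.le)).mono Ioo_subset_Icc_self

end Existence

section Asymptotics

variable {A A' B C y : ℝ → ℝ} {a m β γ K q : ℝ}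

lemma tendsto_mul_sub_add (hB : Tendsto B (𝓝[>] a) (𝓝 β)) (hC : Tendsto C (𝓝[>] a) (𝓝 γ))
    (hy₀ : Tendsto y (𝓝[>] a) (𝓝 0)) :
    Tendsto (fun t => q * (q - B t + C t * y t)) (𝓝[>] a) (𝓝 (q * (q - β))) := by
  simpa only [mul_zero, add_zero] using ((hB.const_sub q).add (hC.mul hy₀)).const_mul q

lemma eventually_le_mul_of_isIntegralCurve (hA : ∀ᶠ t in 𝓝[>] a, HasDerivAt A (A' t) t)
    (hA' : Tendsto A' (𝓝[>] a) (𝓝 m)) (hB : Tendsto B (𝓝[>] a) (𝓝 β))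
    (hC : Tendsto C (𝓝[>] a) (𝓝 γ)) (hA₀ : Tendsto A (𝓝[>] a) (𝓝 0))
    (hy_pos : ∀ᶠ t in 𝓝[>] a, 0 < y t)
    (hy : ∀ᶠ t in 𝓝[>] a, HasDerivAt y (negAbelField A B C t (y t)) t)
    (hy₀ : Tendsto y (𝓝[>] a) (𝓝 0)) (hq : 0 < q) (hqA : m < q * (q - β)) :
    ∀ᶠ t in 𝓝[>] a, A t ≤ q * y t := by
  have hlt := hA'.eventually_lt (tendsto_mul_sub_add hB hC hy₀) hqA
  refine (eventually_nonneg_of_tendsto_zero_of_deriv_pos (g := fun t => q * y t - A t)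
    (g' := fun t => q * negAbelField A B C t (y t) - A' t) ?_ ?_ ?_).mono
      fun t ht => sub_nonneg.1 ht
  · filter_upwards [hA, hy] with t hAt hyt using (hyt.const_mul q).sub hAt
  · simpa only [mul_zero, sub_zero] using (hy₀.const_mul q).sub hA₀
  · filter_upwards [hy_pos, hlt] with t hyt hlt hneg
    have hdiv : q < A t / y t := (lt_div_iff₀ hyt).2 (sub_neg.1 hneg)
    refine sub_pos.2 (hlt.trans ?_)
    unfold negAbelField
    gcongr

lemma eventually_mul_le_of_isIntegralCurve (hA : ∀ᶠ t in 𝓝[>] a, HasDerivAt A (A' t) t)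
    (hA' : Tendsto A' (𝓝[>] a) (𝓝 m)) (hB : Tendsto B (𝓝[>] a) (𝓝 β))
    (hC : Tendsto C (𝓝[>] a) (𝓝 γ)) (hA₀ : Tendsto A (𝓝[>] a) (𝓝 0))
    (hy_pos : ∀ᶠ t in 𝓝[>] a, 0 < y t)
    (hy : ∀ᶠ t in 𝓝[>] a, HasDerivAt y (negAbelField A B C t (y t)) t)
    (hy₀ : Tendsto y (𝓝[>] a) (𝓝 0)) (hq : 0 < q) (hqA : q * (q - β) < m) :
    ∀ᶠ t in 𝓝[>] a, q * y t ≤ A t := by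
  have hlt := (tendsto_mul_sub_add hB hC hy₀).eventually_lt hA' hqA
  refine (eventually_nonneg_of_tendsto_zero_of_deriv_pos (g := fun t => A t - q * y t)
    (g' := fun t => A' t - q * negAbelField A B C t (y t)) ?_ ?_ ?_).mono
      fun t ht => sub_nonneg.1 ht
  · filter_upwards [hA, hy] with t hAt hyt using hAt.sub (hyt.const_mul q)
  · simpa only [mul_zero, sub_zero] using hA₀.sub (hy₀.const_mul q)
  · filter_upwards [hy_pos, hlt] with t hyt hlt hneg
    have hdiv : A t / y t < q := (div_lt_iff₀ hyt).2 (sub_neg.1 hneg)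
    refine sub_pos.2 (lt_trans ?_ hlt)
    unfold negAbelField
    gcongr

lemma tendsto_div_of_isIntegralCurve (hA : ∀ᶠ t in 𝓝[>] a, HasDerivAt A (A' t) t)
    (hA' : Tendsto A' (𝓝[>] a) (𝓝 m)) (hB : Tendsto B (𝓝[>] a) (𝓝 β))
    (hC : Tendsto C (𝓝[>] a) (𝓝 γ)) (hA₀ : Tendsto A (𝓝[>] a) (𝓝 0))
    (hA_pos : ∀ᶠ t in 𝓝[>] a, 0 < A t) (hy_pos : ∀ᶠ t in 𝓝[>] a, 0 < y t)
    (hy : ∀ᶠ t in 𝓝[>] a, HasDerivAt y (negAbelField A B C t (y t)) t)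
    (hy₀ : Tendsto y (𝓝[>] a) (𝓝 0)) (hK₀ : 0 ≤ K) (hBK : β ≤ K) (hK : K * (K - β) = m) :
    Tendsto (fun t => A t / y t) (𝓝[>] a) (𝓝 K) := by
  refine tendsto_order.2 ⟨fun q hqK => ?_, fun q hKq => ?_⟩
  · rcases lt_or_ge q 0 with hq | hq
    · filter_upwards [hA_pos, hy_pos] with t hAt hyt using hq.trans (div_pos hAt hyt)
    · obtain ⟨p, hqp, hpK⟩ := exists_between hqK
      filter_upwards [hy_pos, eventually_mul_le_of_isIntegralCurve hA hA' hB hC hA₀ hy_pos hy hy₀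
        (hq.trans_lt hqp) (by nlinarith)] with t hyt hpt
      exact hqp.trans_le ((le_div_iff₀ hyt).2 hpt)
  · obtain ⟨p, hKp, hpq⟩ := exists_between hKq
    filter_upwards [hy_pos, eventually_le_mul_of_isIntegralCurve hA hA' hB hC hA₀ hy_pos hy hy₀
      (hK₀.trans_lt hKp) (by nlinarith)] with t hyt hpt
    exact ((div_le_iff₀ hyt).2 hpt).trans_lt hpq

lemma tendsto_negAbelField_of_isIntegralCurve (hA : ∀ᶠ t in 𝓝[>] a, HasDerivAt A (A' t) t)
    (hA' : Tendsto A' (𝓝[>] a) (𝓝 m)) (hB : Tendsto B (𝓝[>] a) (𝓝 β))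
    (hC : Tendsto C (𝓝[>] a) (𝓝 γ)) (hA₀ : Tendsto A (𝓝[>] a) (𝓝 0))
    (hA_pos : ∀ᶠ t in 𝓝[>] a, 0 < A t) (hy_pos : ∀ᶠ t in 𝓝[>] a, 0 < y t)
    (hy : ∀ᶠ t in 𝓝[>] a, HasDerivAt y (negAbelField A B C t (y t)) t)
    (hy₀ : Tendsto y (𝓝[>] a) (𝓝 0)) (hK₀ : 0 ≤ K) (hBK : β ≤ K) (hK : K * (K - β) = m) :
    Tendsto (fun t => negAbelField A B C t (y t)) (𝓝[>] a) (𝓝 (K - β)) := by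
  have hdiv := tendsto_div_of_isIntegralCurve hA hA' hB hC hA₀ hA_pos hy_pos hy hy₀ hK₀ hBK hK
  simpa only [negAbelField, mul_zero, add_zero] using (hdiv.sub hB).add (hC.mul hy₀)

end Asymptotics

lemma root_half_add_sqrt {β m : ℝ} (hm : 0 ≤ m) :
    0 ≤ β / 2 + √(β ^ 2 / 4 + m) ∧ β ≤ β / 2 + √(β ^ 2 / 4 + m) ∧
      (β / 2 + √(β ^ 2 / 4 + m)) * (β / 2 + √(β ^ 2 / 4 + m) - β) = m := by
  have hsq := Real.sq_sqrt (show 0 ≤ β ^ 2 / 4 + m by positivity)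
  have habs : |β / 2| ≤ √(β ^ 2 / 4 + m) := Real.abs_le_sqrt (by linarith)
  have := abs_le.1 habs
  exact ⟨by linarith, by linarith, by linarith⟩

lemma contDiffOn_one_of_isIntegralCurveOn {f : ℝ → ℝ → ℝ} {y : ℝ → ℝ} {s : Set ℝ}
    (hs : IsOpen s) (hy : IsIntegralCurveOn y f s) (hf : ContinuousOn (fun t => f t (y t)) s) :
    ContDiffOn ℝ 1 y s := by
  refine contDiffOn_one_iff_derivWithin hs.uniqueDiffOn |>.2
    ⟨fun t ht => (hy t ht).differentiableWithinAt, hf.congr fun t ht => ?_⟩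
  exact (hy t ht).derivWithin (hs.uniqueDiffOn t ht)

lemma exists_pos_isIntegralCurveOn_negAbelField_tendsto {A B C : ℝ → ℝ} {a b : ℝ}
    (hA : ContDiff ℝ 1 A) (hB : Continuous B) (hC : Continuous C) (hab : a < b) (hAa : A a = 0)
    (hA_pos : ∀ t ∈ Ioo a b, 0 < A t) :
    ∃ y : ℝ → ℝ, (∀ t ∈ Ioo a b, 0 < y t) ∧
      IsIntegralCurveOn y (negAbelField A B C) (Ioo a b) ∧ Tendsto y (𝓝[>] a) (𝓝 0) ∧
      Tendsto (fun t => negAbelField A B C t (y t)) (𝓝[>] a)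
        (𝓝 (B a / 2 + √(B a ^ 2 / 4 + deriv A a) - B a)) := by
  have hA_deriv (t : ℝ) : HasDerivAt A (deriv A t) t :=
    (hA.differentiable one_ne_zero t).hasDerivAt
  have hA' : Continuous (deriv A) := hA.continuous_deriv le_rfl
  obtain ⟨y, hy_pos, hy, hy₀⟩ := exists_pos_isIntegralCurveOn_negAbelField hab
    (fun t _ => (hA_deriv t).hasDerivWithinAt) hA'.continuousOn hB.continuousOn hC.continuousOn
    hAa hA_pos
  have near : ∀ᶠ t in 𝓝[>] a, t ∈ Ioo a b := Ioo_mem_nhdsGT hab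
  have tendsto_right {f : ℝ → ℝ} (hf : Continuous f) : Tendsto f (𝓝[>] a) (𝓝 (f a)) :=
    hf.continuousWithinAt
  obtain ⟨hK₀, hBK, hK⟩ := root_half_add_sqrt (β := B a)
    (deriv_nonneg_of_eventually_pos (hA_deriv a).differentiableAt hAa (near.mono hA_pos))
  exact ⟨y, hy_pos, hy, hy₀, tendsto_negAbelField_of_isIntegralCurve (.of_forall hA_deriv)
    (tendsto_right hA') (tendsto_right hB) (tendsto_right hC) (hAa ▸ tendsto_right hA.continuous)
    (near.mono hA_pos) (near.mono hy_pos)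
    (near.mono fun t ht => (hy t ht).hasDerivAt (isOpen_Ioo.mem_nhds ht)) hy₀ hK₀ hBK hK⟩

theorem negative_solution_from_left_zero_general {A B C : ℝ → ℝ} {a b : ℝ}
    (hA : ContDiff ℝ 1 A) (hB : Continuous B) (hC : Continuous C) (hab : a < b) (hAa : A a = 0)
    (hApos : ∀ t ∈ Ioo a b, 0 < A t) :
    ∃ x : ℝ → ℝ, ContDiffOn ℝ 1 x (Ioo a b) ∧
      (∀ t ∈ Ioo a b, x t * deriv x t = A t + B t * x t + C t * x t ^ 2) ∧
      (∀ t ∈ Ioo a b, x t < 0) ∧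
      Tendsto x (𝓝[>] a) (𝓝 0) ∧
      Tendsto (deriv x) (𝓝[>] a)
        (𝓝 (B a / 2 - Real.sqrt (B a ^ 2 / 4 + deriv A a))) := by
  obtain ⟨y, hy_pos, hy, hy₀, hslope⟩ :=
    exists_pos_isIntegralCurveOn_negAbelField_tendsto hA hB hC hab hAa hApos
  have deriv_neg_y (t : ℝ) (ht : t ∈ Ioo a b) :
      deriv (fun t => -y t) t = -negAbelField A B C t (y t) :=
    ((hy t ht).hasDerivAt (isOpen_Ioo.mem_nhds ht)).neg.deriv
  have hfield : ContinuousOn (fun t => negAbelField A B C t (y t)) (Ioo a b) :=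
    continuousOn_negAbelField_comp hA.continuous.continuousOn hB.continuousOn hC.continuousOn
      hy.continuousOn fun t ht => (hy_pos t ht).ne'
  refine ⟨fun t => -y t, (contDiffOn_one_of_isIntegralCurveOn isOpen_Ioo hy hfield).neg,
    fun t ht => ?_, fun t ht => neg_neg_of_pos (hy_pos t ht), ?_, ?_⟩
  · exact deriv_neg_y t ht ▸ neg_mul_neg_negAbelField (hy_pos t ht).ne'
  · simpa only [neg_zero] using hy₀.neg
  · have near : ∀ᶠ t in 𝓝[>] a, t ∈ Ioo a b := Ioo_mem_nhdsGT hab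
    refine Tendsto.congr' (near.mono fun t ht => (deriv_neg_y t ht).symm) ?_
    convert hslope.neg using 2
    ring

/-- under (H) with B > 0, between consecutive zeros a < b of A with A > 0 on (a,b),
there is a negative C¹ solution x* of (N) on (a,b) with x*(t) → 0 and
x*′(t) → B(a)/2 − √(B(a)²/4 + A′(a)) as t → a⁺. -/
theorem negative_solution_from_left_zero
    (T : ℝ) (hT : 0 < T) (A B C : ℝ → ℝ)
    (hA : ContDiff ℝ 1 A) (hB : ContDiff ℝ 1 B) (hC : ContDiff ℝ 1 C)
    (hAper : Function.Periodic A T) (hBper : Function.Periodic B T)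
    (hCper : Function.Periodic C T)
    (hzero : ∃ t ∈ Icc (0 : ℝ) T, A t = 0)
    (hcond : (sInf ((fun t => |B t|) '' Icc (0 : ℝ) T)) ^ 2 >
      -4 * sInf ((fun t => deriv A t) '' Icc (0 : ℝ) T) *
        (1 + T * sSup ((fun t => |C t|) '' Icc (0 : ℝ) T)))
    (hBpos : ∀ t : ℝ, 0 < B t)
    (a b : ℝ) (hab : a < b) (hAa : A a = 0) (hAb : A b = 0)
    (hApos : ∀ t ∈ Ioo a b, 0 < A t) :
    ∃ x : ℝ → ℝ, ContDiffOn ℝ 1 x (Ioo a b) ∧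
      (∀ t ∈ Ioo a b, x t * deriv x t = A t + B t * x t + C t * x t ^ 2) ∧
      (∀ t ∈ Ioo a b, x t < 0) ∧
      Tendsto x (𝓝[>] a) (𝓝 0) ∧
      Tendsto (deriv x) (𝓝[>] a)
        (𝓝 (B a / 2 - Real.sqrt (B a ^ 2 / 4 + deriv A a))) := by
  exact negative_solution_from_left_zero_general hA hB.continuous hC.continuous hab hAa hApos
end
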